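/- arXiv:2107.02158 — 2 statements merged into one kernel-verified Lean document; each statement's English description precedes it below -/
import Mathlib

section
/- For every integer k ≥ 1 there exist constants c > 0 and C > 0 (depending only on k) such that for all sufficiently large N and all real 2 ≤ w, z ≤ Q, where Q := exp((log N)^{1/10}), one has ‖Λ_{Cramér,w} − Λ_{Cramér,z}‖_{U^k([N])} ≤ C·((log N)^{−c} + w^{−c} + z^{−c}). -/
open scoped Classical

noncomputable section

/-- The product of conjugated shifts appearing in the Gowers norm over an additive group. -/
def gowersProd {G : Type*} [AddCommGroup G] (k : ℕ) (f : G → ℂ) (n : G) (h : Fin k → G) : ℂ :=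
  ∏ ω : Fin k → Bool,
    (⇑(starRingEnd ℂ))^[(Finset.univ.filter fun i => ω i = true).card]
      (f (n + ∑ i, if ω i then h i else 0))

/-- The unnormalized Gowers norm `‖f‖_{Ũ^k(G)}`. -/
def gowersTildeU {G : Type*} [AddCommGroup G] (k : ℕ) (f : G → ℂ) : ℝ :=
  (∑' nh : G × (Fin k → G), gowersProd k f nh.1 nh.2).re ^ ((1 : ℝ) / 2 ^ k)

/-- The restriction `f·1_{[N]}` of `f : ℤ → ℂ` to `[N] = {n ∈ ℕ : 1 ≤ n ≤ N}`. -/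
def truncN (N : ℝ) (f : ℤ → ℂ) : ℤ → ℂ := fun n => if 1 ≤ n ∧ (n : ℝ) ≤ N then f n else 0

/-- The local (normalized) Gowers norm `‖f‖_{U^k([N])}`. -/
def gowersUN (k : ℕ) (N : ℝ) (f : ℤ → ℂ) : ℝ :=
  gowersTildeU k (truncN N f) / gowersTildeU k (truncN N fun _ => 1)

/-- The Cramér model `Λ_{Cramér,w}(n) = ∏_{p < w, p prime} (p/(p-1))·1_{p ∤ n}`. -/
def cramer (w : ℝ) (n : ℤ) : ℝ :=
  ∏ p ∈ (Finset.range (⌈w⌉₊ + 1)).filter fun p => Nat.Prime p ∧ (p : ℝ) < w,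
    if (p : ℤ) ∣ n then 0 else (p : ℝ) / ((p : ℝ) - 1)

/-- The quantity `Q = exp((log N)^{1/10})`. -/
def Qparam (N : ℝ) : ℝ := Real.exp (Real.log N ^ ((1 : ℝ) / 10))

end

/-!
For `w ≤ Q` the Cramér model is a function of the residues modulo the primes `p ≤ Q`, so the
`2 ^ k`-th power of the Gowers norm is the average over the cubes in `[1, N]` of a function `F` of
those residues. Two comparisons bound it.

*Sieve.* Expanding each factor as a divisor sum `∑ a_J 1_{P_J ∣ n}` truncated at `|J| ≤ r`, the
average of `F` over cubes in `[1, N]` is close to its average over all residue cubes: the tail is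
small because the number of primes dividing a value has a bounded exponential moment, and the
main terms have moduli at most `Q ^ (2 ^ k * r)`, which is a small power of `N` when
`r ≈ (log N) ^ (1 / 5)`.

*Local factors.* By the Chinese remainder theorem the average over residue cubes splits, after
expanding the product of differences, into an alternating sum of products over the primes of local
averages, each `1 + O(1 / p ^ 2)`. The primes below `min w z` contribute the same product to all
terms, while the others contribute `1 + O(1 / min w z)`, so the alternating sum is
`O(1 / min w z)`.
-/

namespace CramerModel

open Finset Function
open scoped BigOperators

section FiniteAverages

lemma expect_comp_of_surjective {G H : Type*} [AddGroup G] [AddGroup H] [Fintype G] [Fintype H]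
    (φ : G →+ H) (hφ : Surjective φ) (f : H → ℝ) : 𝔼 g, f (φ g) = 𝔼 h, f h := by
  have translate_right (h : H) : 𝔼 g, f (φ g + h) = 𝔼 g, f (φ g) := by
    obtain ⟨g₀, rfl⟩ := hφ h
    exact Fintype.expect_equiv (Equiv.addRight g₀) _ _ fun g => by simp
  have translate_left (g : G) : 𝔼 h, f (φ g + h) = 𝔼 h, f h :=
    Fintype.expect_equiv (Equiv.addLeft (φ g)) _ _ fun _ => rfl
  calc 𝔼 g, f (φ g) = 𝔼 h, 𝔼 g, f (φ g + h) := by simp only [translate_right, Fintype.expect_const]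
    _ = 𝔼 g, 𝔼 h, f (φ g + h) := expect_comm _ _ _
    _ = 𝔼 h, f h := by simp only [translate_left, Fintype.expect_const]

lemma expect_prod_apply {ι : Type*} [Fintype ι] {α : ι → Type*} [∀ i, Fintype (α i)]
    (f : ∀ i, α i → ℝ) : 𝔼 y : ∀ i, α i, ∏ i, f i (y i) = ∏ i, 𝔼 a, f i a := by
  simp only [Fintype.expect_eq_sum_div_card, prod_div_distrib, Fintype.card_pi, Nat.cast_prod,
    prod_univ_sum, Fintype.piFinset_univ]

end FiniteAverages

section ProductInequalities

variable {κ : Type*} {s : Finset κ}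

lemma prod_le_sum_pow_card (hs : s.Nonempty) {f : κ → ℝ} (hf : ∀ i ∈ s, 0 ≤ f i) :
    ∏ i ∈ s, f i ≤ ∑ i ∈ s, f i ^ #s := by
  obtain ⟨j, hj, hmax⟩ := s.exists_max_image f hs
  calc ∏ i ∈ s, f i ≤ ∏ _i ∈ s, f j := prod_le_prod hf hmax
    _ = f j ^ #s := prod_const _
    _ ≤ ∑ i ∈ s, f i ^ #s :=
      single_le_sum (f := fun i => f i ^ #s) (fun i hi => pow_nonneg (hf i hi) _) hj

lemma abs_prod_sub_prod_le {a b c : κ → ℝ} {ε : ℝ} (ha : ∀ i ∈ s, |a i| ≤ c i)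
    (hb : ∀ i ∈ s, |b i| ≤ c i) (hab : ∀ i ∈ s, |a i - b i| ≤ ε * c i) :
    |∏ i ∈ s, a i - ∏ i ∈ s, b i| ≤ #s * ε * ∏ i ∈ s, c i := by
  induction s using Finset.cons_induction with
  | empty => simp
  | cons j s hj ih =>
    simp only [forall_mem_cons] at ha hb hab
    have hprod : |∏ i ∈ s, b i| ≤ ∏ i ∈ s, c i := by
      rw [abs_prod]; exact prod_le_prod (fun _ _ => abs_nonneg _) hb.2
    have hc : 0 ≤ c j := (abs_nonneg _).trans ha.1
    calc |∏ i ∈ cons j s hj, a i - ∏ i ∈ cons j s hj, b i|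
        = |a j * (∏ i ∈ s, a i - ∏ i ∈ s, b i) + (a j - b j) * ∏ i ∈ s, b i| := by
          rw [prod_cons, prod_cons]; ring_nf
      _ ≤ |a j| * |∏ i ∈ s, a i - ∏ i ∈ s, b i| + |a j - b j| * |∏ i ∈ s, b i| := by
          simpa only [abs_mul] using
            abs_add_le (a j * (∏ i ∈ s, a i - ∏ i ∈ s, b i)) ((a j - b j) * ∏ i ∈ s, b i)
      _ ≤ c j * (#s * ε * ∏ i ∈ s, c i) + ε * c j * ∏ i ∈ s, c i := by
          gcongr
          · exact ha.1
          · exact ih ha.2 hb.2 hab.2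
          · exact (abs_nonneg _).trans hab.1
          · exact hab.1
      _ = #(cons j s hj) * ε * ∏ i ∈ cons j s hj, c i := by
          rw [prod_cons, card_cons]; push_cast; ring

lemma abs_alternating_sum_powerset_le (hs : s.Nonempty) {f : Finset κ → ℝ} {b δ : ℝ}
    (hf : ∀ T ∈ s.powerset, |f T - b| ≤ δ) :
    |∑ T ∈ s.powerset, (-1) ^ #T * f T| ≤ 2 ^ #s * δ := by
  have halt : ∑ T ∈ s.powerset, (-1 : ℝ) ^ #T = 0 := by
    exact_mod_cast sum_powerset_neg_one_pow_card_of_nonempty hs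
  calc |∑ T ∈ s.powerset, (-1) ^ #T * f T|
      = |∑ T ∈ s.powerset, (-1) ^ #T * (f T - b)| := by
        simp only [mul_sub, sum_sub_distrib, ← sum_mul, halt, zero_mul, sub_zero]
    _ ≤ ∑ T ∈ s.powerset, |(-1) ^ #T * (f T - b)| := abs_sum_le_sum_abs _ _
    _ = ∑ T ∈ s.powerset, |f T - b| := by simp only [abs_mul, abs_neg_one_pow, one_mul]
    _ ≤ #s.powerset • δ := sum_le_card_nsmul _ _ _ hf
    _ = 2 ^ #s * δ := by simp

lemma sum_inv_sq_le {P : κ → ℕ} (hP : Set.InjOn P s) {m : ℝ} (hm : 0 < m)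
    (hle : ∀ i ∈ s, m ≤ P i) : ∑ i ∈ s, ((P i : ℝ) ^ 2)⁻¹ ≤ 2 / m := by
  have hceil : 0 < ⌈m⌉₊ := Nat.ceil_pos.2 hm
  calc ∑ i ∈ s, ((P i : ℝ) ^ 2)⁻¹ = ∑ n ∈ s.image P, ((n : ℝ) ^ 2)⁻¹ := by
        rw [sum_image hP]
    _ ≤ ∑ n ∈ Ioo (⌈m⌉₊ - 1) ((s.image P).sup id + 1), ((n : ℝ) ^ 2)⁻¹ := by
        refine sum_le_sum_of_subset_of_nonneg (fun n hn => ?_) fun _ _ _ => by positivity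
        have hsup : n ≤ (s.image P).sup id := le_sup (f := id) hn
        obtain ⟨i, hi, rfl⟩ := mem_image.1 hn
        have := Nat.ceil_le.2 (hle i hi)
        rw [mem_Ioo]
        omega
    _ ≤ 2 / ((⌈m⌉₊ - 1 : ℕ) + 1) := sum_Ioo_inv_sq_le _ _
    _ ≤ 2 / m := by
        gcongr
        exact (Nat.le_ceil m).trans (by exact_mod_cast (Nat.sub_add_cancel hceil).ge)

lemma exp_sub_one_le_mul_exp (x : ℝ) : Real.exp x - 1 ≤ x * Real.exp x := by
  have hmul : Real.exp x * Real.exp (-x) = 1 := by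
    rw [← Real.exp_add, add_neg_cancel, Real.exp_zero]
  nlinarith [Real.add_one_le_exp (-x), Real.exp_pos x]

lemma abs_prod_sub_one_le_exp {P : κ → ℕ} (hP : Set.InjOn P s) {m D : ℝ} (hm : 0 < m)
    (hD : 0 ≤ D) (hle : ∀ i ∈ s, m ≤ P i) {b : κ → ℝ}
    (hb : ∀ i ∈ s, |b i - 1| ≤ D / (P i : ℝ) ^ 2) :
    |∏ i ∈ s, b i - 1| ≤ Real.exp (2 * D / m) - 1 := by
  have hsum : ∑ i ∈ s, ‖b i - 1‖ ≤ 2 * D / m := calc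
    ∑ i ∈ s, ‖b i - 1‖ ≤ ∑ i ∈ s, D * ((P i : ℝ) ^ 2)⁻¹ := sum_le_sum hb
    _ = D * ∑ i ∈ s, ((P i : ℝ) ^ 2)⁻¹ := (mul_sum _ _ _).symm
    _ ≤ D * (2 / m) := by gcongr; exact sum_inv_sq_le hP hm hle
    _ = 2 * D / m := by ring
  have hprod := norm_prod_one_add_sub_one_le s fun i => b i - 1
  simp only [add_sub_cancel, Real.norm_eq_abs] at hprod hsum
  exact hprod.trans (by gcongr)

lemma prod_Icc_div_sub_one {n : ℕ} (hn : 1 ≤ n) : ∏ p ∈ Icc 2 n, (p : ℝ) / (p - 1) = n := by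
  induction n, hn using Nat.le_induction with
  | base => simp
  | succ n hn ih =>
    have hn₀ : (n : ℝ) ≠ 0 := by positivity
    rw [prod_Icc_succ_top (by lia), ih]
    push_cast
    rw [add_sub_cancel_right, mul_div_cancel₀ _ hn₀]

lemma one_le_div_sub_one {p : ℕ} (hp : 1 < p) : 1 ≤ (p : ℝ) / (p - 1) := by
  have : (1 : ℝ) < p := by exact_mod_cast hp
  rw [one_le_div (by linarith)]
  linarith

lemma prod_div_sub_one_le {t : Finset ℕ} {n : ℕ} (hn : 1 ≤ n) (ht : t ⊆ Icc 2 n) :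
    ∏ p ∈ t, (p : ℝ) / (p - 1) ≤ n := calc
  ∏ p ∈ t, (p : ℝ) / (p - 1) ≤ ∏ p ∈ Icc 2 n, (p : ℝ) / (p - 1) :=
    prod_le_prod_of_subset_of_one_le ht
      (fun _ hp => zero_le_one.trans (one_le_div_sub_one (mem_Icc.1 (ht hp)).1))
      fun _ hp _ => one_le_div_sub_one (mem_Icc.1 hp).1
  _ = n := prod_Icc_div_sub_one hn

lemma card_filter_card_le_le_pow (ι : Type*) [Fintype ι] (r : ℕ) :
    #{J : Finset ι | #J ≤ r} ≤ (Fintype.card ι + 1) ^ r := by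
  have hunion : ({J : Finset ι | #J ≤ r} : Finset (Finset ι)) =
      (range (r + 1)).biUnion fun j => univ.powersetCard j := by
    ext J; simp
  calc #{J : Finset ι | #J ≤ r} ≤ ∑ j ∈ range (r + 1), #(univ.powersetCard j : Finset (Finset ι)) :=
        hunion ▸ card_biUnion_le
    _ = ∑ j ∈ range (r + 1), (Fintype.card ι).choose j := by
        simp only [card_powersetCard, card_univ]
    _ ≤ ∑ j ∈ range (r + 1), Fintype.card ι ^ j * r.choose j := by
        refine sum_le_sum fun j hj => ?_
        have hchoose : 1 ≤ r.choose j := Nat.choose_pos (Nat.lt_succ_iff.1 (mem_range.1 hj))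
        exact (Nat.choose_le_pow _ _).trans (Nat.le_mul_of_pos_right _ hchoose)
    _ = (Fintype.card ι + 1) ^ r := by rw [add_pow]; simp

end ProductInequalities

section DivisorSums

variable {ι : Type*}

/-- The divisor sum with sieve weights `c`: when `I` collects the indices of the moduli dividing
an integer `n`, this is `∑ c_d` over the products `d` of distinct moduli dividing `n`. -/
def divisorSum (c : Finset ι → ℝ) (I : Finset ι) : ℝ := ∑ J ∈ I.powerset, c J

/-- The sieve weights `c` restricted to products of at most `r` moduli. -/
def truncCoeff (r : ℕ) (c : Finset ι → ℝ) (J : Finset ι) : ℝ := if #J ≤ r then c J else 0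

lemma abs_divisorSum_le {c : Finset ι → ℝ} {B : ℝ} (hc : ∀ J, |c J| ≤ B * 2 ^ #J) (I : Finset ι) :
    |divisorSum c I| ≤ B * 3 ^ #I := calc
  |divisorSum c I| ≤ ∑ J ∈ I.powerset, |c J| := abs_sum_le_sum_abs _ _
  _ ≤ ∑ J ∈ I.powerset, B * 2 ^ #J := sum_le_sum fun J _ => hc J
  _ = B * 3 ^ #I := by
    have := sum_pow_mul_eq_add_pow (2 : ℝ) 1 I
    simp only [one_pow, mul_one] at this
    rw [← mul_sum, this]
    norm_num

section Truncation

variable {c : Finset ι → ℝ} {B : ℝ} (hc : ∀ J, |c J| ≤ B)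
include hc

lemma abs_coeff_le_mul_two_pow (J : Finset ι) : |c J| ≤ B * 2 ^ #J :=
  (hc J).trans <| le_mul_of_one_le_right ((abs_nonneg _).trans (hc J)) (one_le_pow₀ one_le_two)

lemma abs_truncCoeff_le (r : ℕ) (J : Finset ι) : |truncCoeff r c J| ≤ B := by
  unfold truncCoeff
  split_ifs
  · exact hc J
  · simpa only [abs_zero] using (abs_nonneg _).trans (hc J)

-- Rankin's trick: a set with more than `r` elements satisfies `1 ≤ 2 ^ (#J - r)`.
lemma abs_coeff_sub_truncCoeff_le (r : ℕ) (J : Finset ι) :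
    |c J - truncCoeff r c J| ≤ (1 / 2) ^ r * B * 2 ^ #J := by
  have hB : 0 ≤ B := (abs_nonneg _).trans (hc J)
  unfold truncCoeff
  split_ifs with hJ
  · rw [sub_self, abs_zero]; positivity
  · rw [sub_zero, mul_right_comm]
    refine (hc J).trans (le_mul_of_one_le_left hB ?_)
    rw [one_div, inv_pow, inv_mul_eq_div, one_le_div (by positivity)]
    exact pow_le_pow_right₀ one_le_two (not_le.1 hJ).le

lemma abs_prod_divisorSum_sub_le {κ : Type*} [Fintype κ] [Nonempty κ] (r : ℕ)
    (s : κ → Finset ι) :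
    |∏ ω, divisorSum c (s ω) - ∏ ω, divisorSum (truncCoeff r c) (s ω)| ≤
      Fintype.card κ * (1 / 2) ^ r * B ^ Fintype.card κ *
        ∑ ω, (3 ^ Fintype.card κ : ℝ) ^ #(s ω) := by
  have hB : 0 ≤ B := (abs_nonneg _).trans (hc ∅)
  have hsub (I : Finset ι) : |divisorSum c I - divisorSum (truncCoeff r c) I| ≤
      (1 / 2) ^ r * (B * 3 ^ #I) := by
    rw [← mul_assoc]
    simpa only [divisorSum, sum_sub_distrib] using
      abs_divisorSum_le (abs_coeff_sub_truncCoeff_le hc r) I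
  calc |∏ ω, divisorSum c (s ω) - ∏ ω, divisorSum (truncCoeff r c) (s ω)|
      ≤ Fintype.card κ * (1 / 2) ^ r * ∏ ω, B * 3 ^ #(s ω) :=
        abs_prod_sub_prod_le (fun ω _ => abs_divisorSum_le (abs_coeff_le_mul_two_pow hc) (s ω))
          (fun ω _ => abs_divisorSum_le
            (abs_coeff_le_mul_two_pow (abs_truncCoeff_le hc r)) (s ω))
          fun ω _ => hsub (s ω)
    _ = Fintype.card κ * (1 / 2) ^ r * B ^ Fintype.card κ * ∏ ω, (3 : ℝ) ^ #(s ω) := by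
        rw [prod_mul_distrib, prod_const, card_univ, mul_assoc, mul_assoc, mul_assoc]
    _ ≤ Fintype.card κ * (1 / 2) ^ r * B ^ Fintype.card κ *
          ∑ ω, ((3 : ℝ) ^ #(s ω)) ^ Fintype.card κ := by
        gcongr
        exact prod_le_sum_pow_card univ_nonempty fun _ _ => by positivity
    _ = _ := by simp only [← pow_mul, mul_comm]

end Truncation

/-- The sieve axiom (upper bound) for the random set `s a`, with `a` uniform in `D`: up to the
factor `A`, the events `i ∈ s a` are at most as correlated as independent ones of probability
`x i`. -/
def HasDivisorDensity {α : Type*} (x : ι → ℝ) (A : ℝ) (D : Finset α) (s : α → Finset ι) : Prop :=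
  ∀ J, 𝔼 a ∈ D, (if J ⊆ s a then (1 : ℝ) else 0) ≤ A * ∏ i ∈ J, x i

variable {α : Type*} {x : ι → ℝ} {A : ℝ} {D : Finset α}

lemma HasDivisorDensity.nonneg {s : α → Finset ι} (h : HasDivisorDensity x A D s) : 0 ≤ A := by
  simpa only [prod_empty, mul_one] using
    (expect_nonneg fun a _ => by split_ifs <;> norm_num).trans (h ∅)

variable [Fintype ι]

lemma HasDivisorDensity.expect_pow_card_le {s : α → Finset ι} (h : HasDivisorDensity x A D s)
    (hx : ∀ i, 0 ≤ x i) (n : ℕ) :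
    𝔼 a ∈ D, (1 + n : ℝ) ^ #(s a) ≤ A * (∏ i, (1 + x i)) ^ n := calc
  𝔼 a ∈ D, (1 + n : ℝ) ^ #(s a)
      = 𝔼 a ∈ D, ∑ J : Finset ι, (n : ℝ) ^ #J * if J ⊆ s a then 1 else 0 := by
        refine expect_congr rfl fun a _ => ?_
        rw [← prod_const, prod_one_add]
        simp only [prod_const, mul_ite, mul_one, mul_zero, ← sum_filter]
        exact sum_congr (by ext; simp) fun _ _ => rfl
  _ = ∑ J : Finset ι, (n : ℝ) ^ #J * 𝔼 a ∈ D, if J ⊆ s a then 1 else 0 := by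
        simp only [expect_sum_comm, mul_expect]
  _ ≤ ∑ J : Finset ι, (n : ℝ) ^ #J * (A * ∏ i ∈ J, x i) := by
        gcongr with J; exact h J
  _ = A * ∏ i, (1 + n * x i) := by
        rw [prod_one_add, powerset_univ, mul_sum]
        exact sum_congr rfl fun J _ => by rw [prod_mul_distrib, prod_const]; ring
  _ ≤ A * (∏ i, (1 + x i)) ^ n := by
        rw [← prod_pow]
        refine mul_le_mul_of_nonneg_left (prod_le_prod (fun i _ => ?_) fun i _ => ?_) h.nonneg
        · have := hx i; positivity
        · exact one_add_mul_le_pow (by linarith [hx i]) n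

variable {κ : Type*} [Fintype κ] {c : Finset ι → ℝ} {B : ℝ}

lemma abs_expect_prod_divisorSum_sub_truncCoeff_le [Nonempty κ] (hc : ∀ J, |c J| ≤ B)
    {s : κ → α → Finset ι} (hx : ∀ i, 0 ≤ x i) (hs : ∀ ω, HasDivisorDensity x A D (s ω)) (r : ℕ) :
    |𝔼 a ∈ D, ∏ ω, divisorSum c (s ω a) - 𝔼 a ∈ D, ∏ ω, divisorSum (truncCoeff r c) (s ω a)| ≤
      A * (Fintype.card κ ^ 2 * (1 / 2) ^ r * B ^ Fintype.card κ *
        (∏ i, (1 + x i)) ^ (3 ^ Fintype.card κ - 1)) := by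
  have hB : 0 ≤ B := (abs_nonneg _).trans (hc ∅)
  have moment (ω : κ) : 𝔼 a ∈ D, (3 ^ Fintype.card κ : ℝ) ^ #(s ω a) ≤
      A * (∏ i, (1 + x i)) ^ (3 ^ Fintype.card κ - 1) := by
    have hcast : (1 + (3 ^ Fintype.card κ - 1 : ℕ) : ℝ) = 3 ^ Fintype.card κ := by
      rw [Nat.cast_sub (Nat.one_le_pow _ _ three_pos)]
      push_cast; ring
    simpa only [hcast] using (hs ω).expect_pow_card_le hx (3 ^ Fintype.card κ - 1)
  rw [← expect_sub_distrib]
  calc |𝔼 a ∈ D, (∏ ω, divisorSum c (s ω a) - ∏ ω, divisorSum (truncCoeff r c) (s ω a))|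
      ≤ 𝔼 a ∈ D, |∏ ω, divisorSum c (s ω a) - ∏ ω, divisorSum (truncCoeff r c) (s ω a)| :=
        abs_expect_le _ _
    _ ≤ 𝔼 a ∈ D, Fintype.card κ * (1 / 2) ^ r * B ^ Fintype.card κ *
          ∑ ω, (3 ^ Fintype.card κ : ℝ) ^ #(s ω a) :=
        expect_le_expect fun a _ => abs_prod_divisorSum_sub_le hc r fun ω => s ω a
    _ = Fintype.card κ * (1 / 2) ^ r * B ^ Fintype.card κ *
          ∑ ω, 𝔼 a ∈ D, (3 ^ Fintype.card κ : ℝ) ^ #(s ω a) := by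
        rw [← mul_expect, expect_sum_comm]
    _ ≤ Fintype.card κ * (1 / 2) ^ r * B ^ Fintype.card κ *
          ∑ _ω : κ, A * (∏ i, (1 + x i)) ^ (3 ^ Fintype.card κ - 1) := by
        gcongr with ω; exact moment ω
    _ = _ := by
        rw [sum_const, card_univ, nsmul_eq_mul]; ring

lemma expect_prod_divisorSum_truncCoeff (c : Finset ι → ℝ) (r : ℕ) (D : Finset α)
    (s : κ → α → Finset ι) :
    𝔼 a ∈ D, ∏ ω, divisorSum (truncCoeff r c) (s ω a) =
      ∑ J ∈ Fintype.piFinset fun _ : κ => ({J | #J ≤ r} : Finset (Finset ι)),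
        (∏ ω, c (J ω)) * 𝔼 a ∈ D, if ∀ ω, J ω ⊆ s ω a then 1 else 0 := by
  have hsum (I : Finset ι) : divisorSum (truncCoeff r c) I =
      ∑ J ∈ ({J | #J ≤ r} : Finset (Finset ι)), c J * if J ⊆ I then 1 else 0 := by
    simp only [divisorSum, truncCoeff, mul_ite, mul_one, mul_zero, ← sum_filter, filter_filter]
    exact sum_congr (by ext; simp [and_comm]) fun _ _ => rfl
  simp only [hsum, prod_univ_sum, prod_mul_distrib, Fintype.prod_boole, expect_sum_comm, mul_expect]

lemma abs_expect_prod_divisorSum_truncCoeff_sub_le (hc : ∀ J, |c J| ≤ B) {β : Type*}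
    {D' : Finset β} {s : κ → α → Finset ι} {s' : κ → β → Finset ι} {r : ℕ} {δ : ℝ}
    (hδ : ∀ J : κ → Finset ι, (∀ ω, #(J ω) ≤ r) →
      |(𝔼 a ∈ D, if ∀ ω, J ω ⊆ s ω a then (1 : ℝ) else 0) -
        𝔼 b ∈ D', if ∀ ω, J ω ⊆ s' ω b then (1 : ℝ) else 0| ≤ δ) :
    |𝔼 a ∈ D, ∏ ω, divisorSum (truncCoeff r c) (s ω a) -
        𝔼 b ∈ D', ∏ ω, divisorSum (truncCoeff r c) (s' ω b)| ≤
      ((Fintype.card ι + 1 : ℝ) ^ r * B) ^ Fintype.card κ * δ := by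
  have hB : 0 ≤ B := (abs_nonneg _).trans (hc ∅)
  have hδ₀ : 0 ≤ δ := (abs_nonneg _).trans (hδ (fun _ => ∅) fun _ => by simp)
  simp only [expect_prod_divisorSum_truncCoeff, ← sum_sub_distrib, ← mul_sub]
  refine (abs_sum_le_sum_abs _ _).trans <| (sum_le_card_nsmul _ _ (B ^ Fintype.card κ * δ)
    fun J hJ => ?_).trans ?_
  · have hprod : ∏ ω, |c (J ω)| ≤ B ^ Fintype.card κ :=
      (prod_le_prod (fun _ _ => abs_nonneg _) fun ω _ => hc (J ω)).trans_eq (by simp)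
    have hJr (ω : κ) : #(J ω) ≤ r := (mem_filter.1 (Fintype.mem_piFinset.1 hJ ω)).2
    rw [abs_mul, abs_prod]
    gcongr
    exact hδ J hJr
  · have hcard : (#{J : Finset ι | #J ≤ r} : ℝ) ≤ (Fintype.card ι + 1 : ℝ) ^ r := by
      exact_mod_cast card_filter_card_le_le_pow ι r
    rw [Fintype.card_piFinset, prod_const, card_univ, nsmul_eq_mul, mul_pow, Nat.cast_pow,
      ← mul_assoc]
    gcongr

theorem abs_expect_prod_divisorSum_sub_le [Nonempty κ] (hc : ∀ J, |c J| ≤ B) {β : Type*}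
    {D' : Finset β} {s : κ → α → Finset ι} {s' : κ → β → Finset ι} {A' : ℝ} {r : ℕ} {δ : ℝ}
    (hx : ∀ i, 0 ≤ x i) (hs : ∀ ω, HasDivisorDensity x A D (s ω))
    (hs' : ∀ ω, HasDivisorDensity x A' D' (s' ω))
    (hδ : ∀ J : κ → Finset ι, (∀ ω, #(J ω) ≤ r) →
      |(𝔼 a ∈ D, if ∀ ω, J ω ⊆ s ω a then (1 : ℝ) else 0) -
        𝔼 b ∈ D', if ∀ ω, J ω ⊆ s' ω b then (1 : ℝ) else 0| ≤ δ) :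
    |𝔼 a ∈ D, ∏ ω, divisorSum c (s ω a) - 𝔼 b ∈ D', ∏ ω, divisorSum c (s' ω b)| ≤
      (A + A') * (Fintype.card κ ^ 2 * (1 / 2) ^ r * B ^ Fintype.card κ *
        (∏ i, (1 + x i)) ^ (3 ^ Fintype.card κ - 1)) +
      ((Fintype.card ι + 1 : ℝ) ^ r * B) ^ Fintype.card κ * δ := by
  have htrunc := abs_expect_prod_divisorSum_sub_truncCoeff_le hc hx hs r
  have htrunc' := abs_expect_prod_divisorSum_sub_truncCoeff_le hc hx hs' r
  have hcompare := abs_expect_prod_divisorSum_truncCoeff_sub_le hc hδ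
  rw [abs_sub_comm] at htrunc'
  linarith [abs_sub_le (𝔼 a ∈ D, ∏ ω, divisorSum c (s ω a))
      (𝔼 a ∈ D, ∏ ω, divisorSum (truncCoeff r c) (s ω a)) (𝔼 b ∈ D', ∏ ω, divisorSum c (s' ω b)),
    abs_sub_le (𝔼 a ∈ D, ∏ ω, divisorSum (truncCoeff r c) (s ω a))
      (𝔼 b ∈ D', ∏ ω, divisorSum (truncCoeff r c) (s' ω b)) (𝔼 b ∈ D', ∏ ω, divisorSum c (s' ω b))]

end DivisorSums

section Cubes

/-- The parameters `(n, h)` of a `k`-dimensional cube `n + ω · h` in `R`. -/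
abbrev GowersCube (k : ℕ) (R : Type*) := R × (Fin k → R)

variable {k : ℕ} {R S : Type*} [AddCommGroup R] [AddCommGroup S]

/-- The vertex `n + ω · h` of the cube `(n, h)`. -/
def cubeVertex (ω : Fin k → Bool) : GowersCube k R →+ R :=
  AddMonoidHom.mk' (fun x => x.1 + ∑ i, if ω i then x.2 i else 0) fun x y => by
    simp only [Prod.fst_add, Prod.snd_add, Pi.add_apply, ← sum_filter, sum_add_distrib]
    abel

/-- The image of a cube under a homomorphism. -/
def cubeMap (φ : R →+ S) : GowersCube k R →+ GowersCube k S :=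
  φ.prodMap (φ.compLeft (Fin k))

lemma cubeVertex_apply (ω : Fin k → Bool) (x : GowersCube k R) :
    cubeVertex ω x = x.1 + ∑ i, if ω i then x.2 i else 0 := rfl

lemma cubeVertex_cubeMap (φ : R →+ S) (ω : Fin k → Bool) (x : GowersCube k R) :
    cubeVertex ω (cubeMap φ x) = φ (cubeVertex ω x) := by
  simp only [cubeVertex_apply, map_add, map_sum, apply_ite φ, map_zero]
  rfl

lemma cubeMap_surjective {φ : R →+ S} (hφ : Surjective φ) :
    Surjective (cubeMap φ : GowersCube k R →+ GowersCube k S) :=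
  hφ.prodMap (hφ.comp_left)

lemma cubeVertex_surjective (ω : Fin k → Bool) :
    Surjective (cubeVertex ω : GowersCube k R →+ R) :=
  fun a => ⟨(a, 0), by simp [cubeVertex_apply]⟩

lemma exists_cubeVertex_eq_and_eq {ω ω' : Fin k → Bool} {i : Fin k} (hω : ω i = true)
    (hω' : ω' i = false) (a b : R) :
    ∃ x : GowersCube k R, cubeVertex ω x = a ∧ cubeVertex ω' x = b := by
  refine ⟨(b, Pi.single i (a - b)), ?_, ?_⟩
  · rw [cubeVertex_apply, sum_eq_single_of_mem i (mem_univ i) fun j _ hj => by simp [hj]]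
    simp [hω]
  · rw [cubeVertex_apply, sum_eq_zero fun j _ => ?_, add_zero]
    rcases eq_or_ne j i with rfl | hj
    · simp [hω']
    · simp [hj]

lemma cubeVertex_prod_surjective {ω ω' : Fin k → Bool} (h : ω ≠ ω') :
    Surjective ((cubeVertex ω).prod (cubeVertex ω') : GowersCube k R →+ R × R) := by
  rintro ⟨a, b⟩
  obtain ⟨i, hi⟩ := ne_iff.1 h
  rcases hω : ω i
  · obtain ⟨x, rfl, rfl⟩ :=
      exists_cubeVertex_eq_and_eq (by simpa [hω] using hi.symm : ω' i = true) hω b a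
    exact ⟨x, rfl⟩
  · obtain ⟨x, rfl, rfl⟩ :=
      exists_cubeVertex_eq_and_eq hω (by simpa [hω] using hi.symm : ω' i = false) a b
    exact ⟨x, rfl⟩

/-- The cubes in `ℤ` all of whose vertices lie in `[1, M]`. -/
noncomputable def cubesIn (k M : ℕ) : Finset (GowersCube k ℤ) :=
  {x ∈ Icc (1 : ℤ) M ×ˢ Fintype.piFinset fun _ : Fin k => Icc (-(M : ℤ)) M |
    ∀ ω, cubeVertex ω x ∈ Icc (1 : ℤ) M}

lemma snd_mem_Icc_of_mem_cubesIn {M : ℕ} {x : GowersCube k ℤ} (hx : x ∈ cubesIn k M) (j : Fin k) :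
    x.2 j ∈ Icc (-(M : ℤ)) M :=
  Fintype.mem_piFinset.1 (mem_product.1 (mem_filter.1 hx).1).2 j

lemma mem_cubesIn {M : ℕ} {x : GowersCube k ℤ} :
    x ∈ cubesIn k M ↔ ∀ ω, cubeVertex ω x ∈ Icc (1 : ℤ) M := by
  refine mem_filter.trans (and_iff_right_of_imp fun h => ?_)
  have hbase : x.1 ∈ Icc (1 : ℤ) M := by
    simpa [cubeVertex_apply] using h fun _ => false
  refine mem_product.2 ⟨hbase, Fintype.mem_piFinset.2 fun j => ?_⟩
  have hedge : x.1 + x.2 j ∈ Icc (1 : ℤ) M := by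
    simpa [cubeVertex_apply] using h fun i => decide (i = j)
  rw [mem_Icc] at *
  lia

lemma cubeVertex_mem_Icc {a b : ℤ} {x : GowersCube k ℤ} (hbase : x.1 ∈ Icc a b)
    (hedge : ∀ j, x.2 j ∈ Icc 0 b) (ω : Fin k → Bool) :
    cubeVertex ω x ∈ Icc a ((k + 1) * b) := by
  rw [mem_Icc] at hbase ⊢
  have hedge' (j : Fin k) : 0 ≤ x.2 j ∧ x.2 j ≤ b := mem_Icc.1 (hedge j)
  have hlower : 0 ≤ ∑ i, if ω i then x.2 i else 0 :=
    sum_nonneg fun i _ => by split_ifs <;> linarith [hedge' i]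
  have hupper : (∑ i, if ω i then x.2 i else 0) ≤ k * b := by
    refine (sum_le_card_nsmul univ _ b fun i _ => ?_).trans_eq (by simp)
    split_ifs <;> linarith [hedge' i]
  rw [cubeVertex_apply]
  constructor <;> linarith

lemma pow_le_card_cubesIn {m M : ℕ} (h : (k + 1) * m ≤ M) : m ^ (k + 1) ≤ #(cubesIn k M) := by
  have hsub : (Icc (1 : ℤ) m ×ˢ Fintype.piFinset fun _ : Fin k => Icc (1 : ℤ) m) ⊆
      cubesIn k M := by
    intro x hx
    rw [mem_product, Fintype.mem_piFinset] at hx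
    refine mem_cubesIn.2 fun ω => Icc_subset_Icc_right (mod_cast h) (cubeVertex_mem_Icc hx.1 ?_ ω)
    exact fun j => Icc_subset_Icc_left zero_le_one (hx.2 j)
  simpa [card_product, pow_succ'] using card_le_card hsub

/-- An upper bound for the ratio between the number of points `(vertex, directions)` of the box
containing all cubes in `[1, M]` and the number of these cubes. -/
def cubeRatio (k : ℕ) : ℝ := (6 * (k + 1)) ^ (k + 1)

lemma cubeRatio_pos : 0 < cubeRatio k := by unfold cubeRatio; positivity

variable {M : ℕ} (hM : k + 1 ≤ M)
include hM

lemma cubesIn_nonempty : (cubesIn k M).Nonempty :=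
  card_pos.1 <| (one_pow (k + 1)).symm.trans_le <| pow_le_card_cubesIn (by lia)

lemma card_box_le_cubeRatio_mul_card_cubesIn :
    (2 * M + 1 : ℝ) ^ k * M ≤ cubeRatio k * #(cubesIn k M) := by
  set m := M / (k + 1)
  have hm : 1 ≤ m := (Nat.one_le_div_iff k.succ_pos).2 hM
  have hMm : M ≤ 2 * (k + 1) * m := by
    have := Nat.lt_mul_div_succ M k.succ_pos
    change M < (k + 1) * (m + 1) at this
    nlinarith
  have hMm' : (M : ℝ) ≤ 2 * (k + 1) * m := by exact_mod_cast hMm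
  have hM₁ : (1 : ℝ) ≤ M := by exact_mod_cast (Nat.le_add_left 1 k).trans hM
  have hcard : (m : ℝ) ^ (k + 1) ≤ #(cubesIn k M) := by
    exact_mod_cast pow_le_card_cubesIn (Nat.mul_div_le M (k + 1))
  calc (2 * M + 1 : ℝ) ^ k * M ≤ (3 * M) ^ k * (3 * M) := by gcongr <;> linarith
    _ = (3 * M) ^ (k + 1) := (pow_succ _ _).symm
    _ ≤ (6 * (k + 1) * m) ^ (k + 1) := by gcongr ?_ ^ _; linarith
    _ = cubeRatio k * m ^ (k + 1) := mul_pow _ _ _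
    _ ≤ cubeRatio k * #(cubesIn k M) := by gcongr; exact cubeRatio_pos.le

omit hM in
lemma sum_cubesIn_cubeVertex_le (ω : Fin k → Bool) {g : ℤ → ℝ} (hg : ∀ a, 0 ≤ g a) :
    ∑ x ∈ cubesIn k M, g (cubeVertex ω x) ≤ (2 * M + 1) ^ k * ∑ a ∈ Icc (1 : ℤ) M, g a := by
  have hinj : Set.InjOn (fun x : GowersCube k ℤ => (cubeVertex ω x, x.2)) (cubesIn k M) := by
    rintro ⟨a, b⟩ _ ⟨c, d⟩ _ h
    obtain ⟨h, rfl⟩ := Prod.mk.inj h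
    simpa [cubeVertex_apply] using h
  calc ∑ x ∈ cubesIn k M, g (cubeVertex ω x)
      = ∑ z ∈ (cubesIn k M).image fun x => (cubeVertex ω x, x.2), g z.1 := by rw [sum_image hinj]
    _ ≤ ∑ z ∈ Icc (1 : ℤ) M ×ˢ Fintype.piFinset fun _ : Fin k => Icc (-(M : ℤ)) M, g z.1 := by
        refine sum_le_sum_of_subset_of_nonneg (image_subset_iff.2 fun x hx => ?_) fun _ _ _ => hg _
        exact mem_product.2 ⟨mem_cubesIn.1 hx ω,
          Fintype.mem_piFinset.2 fun j => snd_mem_Icc_of_mem_cubesIn hx j⟩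
    _ = (2 * M + 1) ^ k * ∑ a ∈ Icc (1 : ℤ) M, g a := by
        have hside : (M + 1 + M : ℤ).toNat = 2 * M + 1 := by lia
        simp [sum_product, ← mul_sum, hside]

lemma expect_cubesIn_cubeVertex_le (ω : Fin k → Bool) {g : ℤ → ℝ} (hg : ∀ a, 0 ≤ g a) :
    𝔼 x ∈ cubesIn k M, g (cubeVertex ω x) ≤ cubeRatio k * 𝔼 a ∈ Icc (1 : ℤ) M, g a := by
  have hM₀ : (0 : ℝ) < M := by exact_mod_cast k.succ_pos.trans_le hM
  have hsum : 0 ≤ ∑ a ∈ Icc (1 : ℤ) M, g a := sum_nonneg fun a _ => hg a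
  rw [expect_eq_sum_div_card, expect_eq_sum_div_card, Int.card_Icc, add_sub_cancel_right,
    Int.toNat_natCast]
  refine div_le_of_le_mul₀ (by positivity) (by have := cubeRatio_pos (k := k); positivity) ?_
  calc ∑ x ∈ cubesIn k M, g (cubeVertex ω x)
      ≤ (2 * M + 1) ^ k * ∑ a ∈ Icc (1 : ℤ) M, g a := sum_cubesIn_cubeVertex_le ω hg
    _ = (2 * M + 1) ^ k * M * ((∑ a ∈ Icc (1 : ℤ) M, g a) / M) := by field_simp
    _ ≤ cubeRatio k * #(cubesIn k M) * ((∑ a ∈ Icc (1 : ℤ) M, g a) / M) := by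
        gcongr ?_ * _; exact card_box_le_cubeRatio_mul_card_cubesIn hM
    _ = cubeRatio k * ((∑ a ∈ Icc (1 : ℤ) M, g a) / M) * #(cubesIn k M) := by ring

omit hM in
lemma expect_Icc_sub_lt_le (M T : ℕ) :
    𝔼 a ∈ Icc (1 : ℤ) M, (if (M : ℤ) - T < a then (1 : ℝ) else 0) ≤ T / M := by
  have hsub : {a ∈ Icc (1 : ℤ) M | (M : ℤ) - T < a} ⊆ Ioc ((M : ℤ) - T) M := by
    intro a ha
    rw [mem_filter, mem_Icc] at ha
    exact mem_Ioc.2 ⟨ha.2, ha.1.2⟩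
  have hcard : #{a ∈ Icc (1 : ℤ) M | (M : ℤ) - T < a} ≤ T := by
    simpa using card_le_card hsub
  rw [expect_eq_sum_div_card, sum_boole, Int.card_Icc, add_sub_cancel_right, Int.toNat_natCast]
  gcongr

lemma expect_cubesIn_add_notMem_le {q : ℕ} {t : GowersCube k ℤ} (hbase : t.1 ∈ Icc (0 : ℤ) q)
    (hedge : ∀ j, t.2 j ∈ Icc (0 : ℤ) q) :
    𝔼 x ∈ cubesIn k M, (if x + t ∈ cubesIn k M then (0 : ℝ) else 1) ≤
      2 ^ k * cubeRatio k * ((k + 1) * q / M) := by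
  set T : ℕ := (k + 1) * q with hT
  have ht (ω : Fin k → Bool) : 0 ≤ cubeVertex ω t ∧ cubeVertex ω t ≤ T := by
    simpa [hT] using cubeVertex_mem_Icc hbase hedge ω
  -- A cube leaves `[1, M]` only if one of its vertices was within `T` of the right end.
  have hleave (x : GowersCube k ℤ) (hx : x ∈ cubesIn k M) :
      (if x + t ∈ cubesIn k M then (0 : ℝ) else 1) ≤
        ∑ ω, if (M : ℤ) - T < cubeVertex ω x then (1 : ℝ) else 0 := by
    split_ifs with hxt
    · exact sum_nonneg fun ω _ => by split_ifs <;> norm_num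
    · obtain ⟨ω, hω⟩ := not_forall.1 (mt mem_cubesIn.2 hxt)
      have hxω := mem_Icc.1 (mem_cubesIn.1 hx ω)
      have := ht ω
      rw [map_add, mem_Icc] at hω
      refine (if_pos (by lia)).ge.trans (single_le_sum
        (f := fun ω => if (M : ℤ) - T < cubeVertex ω x then (1 : ℝ) else 0)
        (fun ω _ => by split_ifs <;> norm_num) (mem_univ ω))
  calc 𝔼 x ∈ cubesIn k M, (if x + t ∈ cubesIn k M then (0 : ℝ) else 1)
      ≤ 𝔼 x ∈ cubesIn k M, ∑ ω, if (M : ℤ) - T < cubeVertex ω x then (1 : ℝ) else 0 :=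
        expect_le_expect hleave
    _ = ∑ ω, 𝔼 x ∈ cubesIn k M, if (M : ℤ) - T < cubeVertex ω x then (1 : ℝ) else 0 :=
        expect_sum_comm _ _ _
    _ ≤ ∑ _ω : Fin k → Bool, cubeRatio k * (T / M : ℝ) := by
        gcongr with ω
        refine (expect_cubesIn_cubeVertex_le hM ω
          (g := fun a => if (M : ℤ) - T < a then (1 : ℝ) else 0)
          fun a => by split_ifs <;> norm_num).trans ?_
        gcongr
        · exact cubeRatio_pos.le
        · exact expect_Icc_sub_lt_le M T
    _ = 2 ^ k * cubeRatio k * ((k + 1) * q / M) := by simp [hT, mul_assoc]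

omit hM in
lemma abs_expect_add_right_sub_le {G : Type*} [AddGroup G] [DecidableEq G] (Ω : Finset G) (t : G)
    {Φ : G → ℝ} (hΦ : ∀ x, |Φ x| ≤ 1) :
    |𝔼 x ∈ Ω, Φ (x + t) - 𝔼 x ∈ Ω, Φ x| ≤ 2 * 𝔼 x ∈ Ω, if x + t ∈ Ω then 0 else 1 := by
  set Ω' := Ω.image (· + t)
  have hcard : #Ω' = #Ω := card_image_of_injective _ (add_left_injective t)
  have hexit : #(Ω' \ Ω) ≤ #{x ∈ Ω | x + t ∉ Ω} := by
    refine (card_le_card fun y hy => ?_).trans (card_image_le (f := (· + t)))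
    obtain ⟨hy', hyΩ⟩ := mem_sdiff.1 hy
    obtain ⟨x, hx, rfl⟩ := mem_image.1 hy'
    exact mem_image.2 ⟨x, mem_filter.2 ⟨hx, hyΩ⟩, rfl⟩
  have hbound (B : Finset G) : |∑ x ∈ B, Φ x| ≤ #B :=
    (abs_sum_le_sum_abs _ _).trans ((sum_le_card_nsmul _ _ 1 fun x _ => hΦ x).trans_eq (by simp))
  have hsum : |∑ x ∈ Ω, Φ (x + t) - ∑ x ∈ Ω, Φ x| ≤ 2 * #{x ∈ Ω | x + t ∉ Ω} := calc
    |∑ x ∈ Ω, Φ (x + t) - ∑ x ∈ Ω, Φ x| = |∑ x ∈ Ω' \ Ω, Φ x - ∑ x ∈ Ω \ Ω', Φ x| := by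
      rw [sum_sdiff_sub_sum_sdiff, sum_image (add_left_injective t).injOn]
    _ ≤ |∑ x ∈ Ω' \ Ω, Φ x| + |∑ x ∈ Ω \ Ω', Φ x| := abs_sub _ _
    _ ≤ #(Ω' \ Ω) + #(Ω \ Ω') := add_le_add (hbound _) (hbound _)
    _ = 2 * #(Ω' \ Ω) := by rw [← card_sdiff_comm hcard]; ring
    _ ≤ 2 * #{x ∈ Ω | x + t ∉ Ω} := by gcongr
  have hindicator : ∑ x ∈ Ω, (if x + t ∈ Ω then (0 : ℝ) else 1) = #{x ∈ Ω | x + t ∉ Ω} := by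
    simp only [← ite_not (p := _ ∈ Ω), sum_boole]
  simp only [expect_eq_sum_div_card, ← sub_div, hindicator, abs_div, Nat.abs_cast]
  rw [← mul_div_assoc]
  gcongr

lemma abs_expect_cubesIn_cubeMap_sub_expect_le {H : Type*} [AddCommGroup H] [Fintype H]
    {φ : ℤ →+ H} {q : ℕ} (hφ : ∀ h, ∃ t ∈ Icc (0 : ℤ) q, φ t = h) {Φ : GowersCube k H → ℝ}
    (hΦ : ∀ y, |Φ y| ≤ 1) :
    |𝔼 x ∈ cubesIn k M, Φ (cubeMap φ x) - 𝔼 y, Φ y| ≤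
      2 * (2 ^ k * cubeRatio k * ((k + 1) * q / M)) := by
  choose lift lift_mem map_lift using hφ
  let liftCube (y : GowersCube k H) : GowersCube k ℤ := (lift y.1, lift ∘ y.2)
  have map_liftCube (y : GowersCube k H) : cubeMap φ (liftCube y) = y :=
    Prod.ext (map_lift _) (funext fun _ => map_lift _)
  have average : 𝔼 y, Φ y = 𝔼 y, 𝔼 x ∈ cubesIn k M, Φ (cubeMap φ (x + liftCube y)) := by
    rw [expect_comm]
    simp only [map_add, map_liftCube]
    have translate (x : GowersCube k ℤ) : 𝔼 y, Φ (cubeMap φ x + y) = 𝔼 y, Φ y :=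
      Fintype.expect_equiv (Equiv.addLeft (cubeMap φ x)) _ _ fun _ => rfl
    simp only [translate, expect_const (cubesIn_nonempty hM)]
  have shift (y : GowersCube k H) :
      |𝔼 x ∈ cubesIn k M, Φ (cubeMap φ x) - 𝔼 x ∈ cubesIn k M, Φ (cubeMap φ (x + liftCube y))| ≤
        2 * (2 ^ k * cubeRatio k * ((k + 1) * q / M)) := by
    rw [abs_sub_comm]
    refine (abs_expect_add_right_sub_le _ _ fun x => hΦ (cubeMap φ x)).trans ?_
    gcongr
    exact expect_cubesIn_add_notMem_le hM (lift_mem _) fun _ => lift_mem _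
  calc |𝔼 x ∈ cubesIn k M, Φ (cubeMap φ x) - 𝔼 y, Φ y|
      = |𝔼 y, (𝔼 x ∈ cubesIn k M, Φ (cubeMap φ x) -
          𝔼 x ∈ cubesIn k M, Φ (cubeMap φ (x + liftCube y)))| := by
        rw [expect_sub_distrib, Fintype.expect_const, average]
    _ ≤ 𝔼 y, |𝔼 x ∈ cubesIn k M, Φ (cubeMap φ x) -
          𝔼 x ∈ cubesIn k M, Φ (cubeMap φ (x + liftCube y))| := abs_expect_le _ _
    _ ≤ 𝔼 _y : GowersCube k H, 2 * (2 ^ k * cubeRatio k * ((k + 1) * q / M)) :=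
        expect_le_expect fun y _ => shift y
    _ = 2 * (2 ^ k * cubeRatio k * ((k + 1) * q / M)) := Fintype.expect_const _

end Cubes

section Residues

variable {ι : Type*} [Fintype ι]

/-- The set of coordinates at which `b` vanishes. For `b` the vector of residues of an integer `n`
modulo the `P i`, it indexes the moduli dividing `n`. -/
noncomputable def zeroSet {R : ι → Type*} [∀ i, Zero (R i)] (b : ∀ i, R i) : Finset ι :=
  {i | b i = 0}

lemma mem_zeroSet {R : ι → Type*} [∀ i, Zero (R i)] {b : ∀ i, R i} {i : ι} :
    i ∈ zeroSet b ↔ b i = 0 := by simp [zeroSet]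

lemma subset_zeroSet {R : ι → Type*} [∀ i, Zero (R i)] {b : ∀ i, R i} {J : Finset ι} :
    J ⊆ zeroSet b ↔ ∀ i ∈ J, b i = 0 := by simp only [subset_iff, mem_zeroSet]

/-- Reduction of an integer modulo each of the `P i`. -/
def residues (P : ι → ℕ) : ℤ →+ ∀ i, ZMod (P i) := Int.castAddHom _

variable {P : ι → ℕ}

omit [Fintype ι] in
lemma residues_apply (a : ℤ) (i : ι) : residues P a i = a := rfl

lemma exists_residues_eq [∀ i, NeZero (P i)] (hP : Pairwise (onFun Nat.Coprime P))
    (a : ∀ i, ZMod (P i)) :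
    ∃ t ∈ Icc (0 : ℤ) (∏ i, P i : ℕ), residues P t = a := by
  have : NeZero (∏ i, P i) := ⟨prod_ne_zero_iff.2 fun i _ => NeZero.ne (P i)⟩
  let e := ZMod.prodEquivPi P hP
  refine ⟨(e.symm a).val, mem_Icc.2 ⟨by positivity, mod_cast (ZMod.val_lt _).le⟩, ?_⟩
  calc residues P (e.symm a).val = e ((e.symm a).val : ZMod (∏ i, P i)) := by
        rw [map_natCast e]; exact Int.cast_natCast _
    _ = a := by rw [ZMod.natCast_zmod_val, e.apply_symm_apply]

lemma hasDivisorDensity_Icc (hP : Pairwise (onFun Nat.Coprime P)) (M : ℕ) :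
    HasDivisorDensity (fun i => (P i : ℝ)⁻¹) 1 (Icc (1 : ℤ) M)
      fun a => zeroSet (residues P a) := by
  intro J
  have hsub : {a ∈ Icc (1 : ℤ) M | J ⊆ zeroSet (residues P a)} ⊆
      {a ∈ Ioc 0 M | ∏ i ∈ J, P i ∣ a}.image ((↑) : ℕ → ℤ) := by
    intro a ha
    obtain ⟨haM, hJ⟩ := mem_filter.1 ha
    rw [mem_Icc] at haM
    lift a to ℕ using by lia
    refine mem_image.2 ⟨a, mem_filter.2 ⟨mem_Ioc.2 (by lia), ?_⟩, rfl⟩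
    refine prod_dvd_of_isRelPrime (fun i _ j _ hij => Nat.coprime_iff_isRelPrime.1 (hP hij))
      fun i hi => ?_
    rw [← ZMod.natCast_eq_zero_iff]
    simpa [residues_apply] using subset_zeroSet.1 hJ i hi
  have hcard := (card_le_card hsub).trans card_image_le
  rw [Nat.Ioc_filter_dvd_card_eq_div] at hcard
  rw [expect_eq_sum_div_card, sum_boole, Int.card_Icc, add_sub_cancel_right, Int.toNat_natCast,
    one_mul, prod_inv_distrib]
  refine div_le_of_le_mul₀ (by positivity) (by positivity) ?_
  calc (#{a ∈ Icc (1 : ℤ) M | J ⊆ zeroSet (residues P a)} : ℝ)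
      ≤ (M / ∏ i ∈ J, P i : ℕ) := by exact_mod_cast hcard
    _ ≤ M / (∏ i ∈ J, P i : ℕ) := Nat.cast_div_le
    _ = (∏ i ∈ J, (P i : ℝ))⁻¹ * M := by push_cast; ring

lemma hasDivisorDensity_residues [∀ i, NeZero (P i)] :
    HasDivisorDensity (fun i => (P i : ℝ)⁻¹) 1 univ
      fun b : ∀ i, ZMod (P i) => zeroSet b := by
  intro J
  have hprod (b : ∀ i, ZMod (P i)) : (if J ⊆ zeroSet b then (1 : ℝ) else 0) =
      ∏ i, if i ∈ J → b i = 0 then 1 else 0 := by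
    simp only [Fintype.prod_boole, subset_zeroSet]
  have hfactor (i : ι) : 𝔼 a : ZMod (P i), (if i ∈ J → a = 0 then (1 : ℝ) else 0) =
      if i ∈ J then (P i : ℝ)⁻¹ else 1 := by
    rw [Fintype.expect_eq_sum_div_card, ZMod.card]
    by_cases hi : i ∈ J <;> simp [hi]
  simp only [hprod, one_mul]
  rw [expect_prod_apply fun i (a : ZMod (P i)) => if i ∈ J → a = 0 then (1 : ℝ) else 0]
  simp only [hfactor, prod_ite_mem, univ_inter, le_refl]

variable {k M : ℕ}

lemma hasDivisorDensity_cubesIn (hM : k + 1 ≤ M) (hP : Pairwise (onFun Nat.Coprime P))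
    (ω : Fin k → Bool) :
    HasDivisorDensity (fun i => (P i : ℝ)⁻¹) (cubeRatio k) (cubesIn k M)
      fun x => zeroSet (residues P (cubeVertex ω x)) := by
  intro J
  refine (expect_cubesIn_cubeVertex_le hM ω
    (g := fun a => if J ⊆ zeroSet (residues P a) then 1 else 0)
    fun a => by split_ifs <;> norm_num).trans ?_
  have := hasDivisorDensity_Icc hP M J
  rw [one_mul] at this
  gcongr
  exact cubeRatio_pos.le

lemma hasDivisorDensity_residueCubes [∀ i, NeZero (P i)] (ω : Fin k → Bool) :
    HasDivisorDensity (fun i => (P i : ℝ)⁻¹) 1 univ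
      fun y : GowersCube k (∀ i, ZMod (P i)) => zeroSet (cubeVertex ω y) := fun J =>
  (expect_comp_of_surjective _ (cubeVertex_surjective ω)
    fun b => if J ⊆ zeroSet b then (1 : ℝ) else 0).trans_le (hasDivisorDensity_residues J)

lemma abs_expect_cubesIn_pattern_sub_le [∀ i, NeZero (P i)] (hM : k + 1 ≤ M)
    (hP : Pairwise (onFun Nat.Coprime P)) {n r : ℕ} (hn : 1 ≤ n) (hPn : ∀ i, P i ≤ n)
    (J : (Fin k → Bool) → Finset ι) (hJ : ∀ ω, #(J ω) ≤ r) :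
    |(𝔼 x ∈ cubesIn k M,
        if ∀ ω, J ω ⊆ zeroSet (residues P (cubeVertex ω x)) then (1 : ℝ) else 0) -
      𝔼 y : GowersCube k (∀ i, ZMod (P i)),
        if ∀ ω, J ω ⊆ zeroSet (cubeVertex ω y) then (1 : ℝ) else 0| ≤
      2 * (2 ^ k * cubeRatio k * ((k + 1) * n ^ (2 ^ k * r) / M)) := by
  set U := univ.biUnion J
  set q := ∏ i : U, P i
  let ρ : (∀ i, ZMod (P i)) →+ ∀ i : U, ZMod (P i) := AddMonoidHom.mk' U.restrict fun _ _ => rfl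
  let Φ (y : GowersCube k (∀ i : U, ZMod (P i))) : ℝ :=
    if ∀ ω, ∀ i : U, ↑i ∈ J ω → cubeVertex ω y i = 0 then 1 else 0
  have pattern (y : GowersCube k (∀ i, ZMod (P i))) :
      (if ∀ ω, J ω ⊆ zeroSet (cubeVertex ω y) then 1 else 0) = Φ (cubeMap ρ y) := by
    simp only [Φ, cubeVertex_cubeMap, subset_zeroSet]
    refine if_congr (forall_congr' fun ω => ⟨fun h i => h i, fun h i hi => ?_⟩) rfl rfl
    exact h ⟨i, mem_biUnion.2 ⟨ω, mem_univ ω, hi⟩⟩ hi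
  have hq : q ≤ n ^ (2 ^ k * r) := calc
    q ≤ n ^ #(univ : Finset U) := prod_le_pow_card _ _ n fun i _ => hPn i
    _ = n ^ #U := by rw [card_univ, Fintype.card_coe]
    _ ≤ n ^ (2 ^ k * r) := by
      gcongr
      exact (card_biUnion_le_card_mul _ _ r fun ω _ => hJ ω).trans_eq (by simp)
  have integers : 𝔼 x ∈ cubesIn k M,
      (if ∀ ω, J ω ⊆ zeroSet (residues P (cubeVertex ω x)) then (1 : ℝ) else 0) =
        𝔼 x ∈ cubesIn k M, Φ (cubeMap (residues fun i : U => P i) x) := by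
    simp only [← cubeVertex_cubeMap, pattern]
    rfl
  have quotient : 𝔼 y : GowersCube k (∀ i, ZMod (P i)),
      (if ∀ ω, J ω ⊆ zeroSet (cubeVertex ω y) then (1 : ℝ) else 0) = 𝔼 y, Φ y := by
    simp only [pattern]
    exact expect_comp_of_surjective _ (cubeMap_surjective (Subtype.surjective_restrict _)) Φ
  rw [integers, quotient]
  refine (abs_expect_cubesIn_cubeMap_sub_expect_le hM (q := q)
    (exists_residues_eq (hP.comp_of_injective Subtype.val_injective)) fun y => ?_).trans ?_
  · simp only [Φ]; split_ifs <;> norm_num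
  · have := cubeRatio_pos (k := k)
    gcongr
    exact_mod_cast hq

end Residues

section LocalFactors

/-- The local factor at `q` of the Cramér model, as a function of the residue modulo `q`. -/
noncomputable def cramerFactor (q : ℕ) (a : ZMod q) : ℝ := if a = 0 then 0 else q / (q - 1)

variable {q : ℕ} (hq : 1 < q)
include hq

lemma cramerFactor_sub_one (a : ZMod q) :
    cramerFactor q a - 1 = ((q : ℝ) - 1)⁻¹ - if a = 0 then q / ((q : ℝ) - 1) else 0 := by
  have : (0 : ℝ) < q - 1 := sub_pos.2 (mod_cast hq)
  unfold cramerFactor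
  split_ifs <;> field_simp <;> ring

lemma abs_cramerFactor_sub_one (a : ZMod q) :
    |cramerFactor q a - 1| = ((q : ℝ) - 1)⁻¹ + if a = 0 then ((q : ℝ) - 2) / (q - 1) else 0 := by
  have : (0 : ℝ) < q - 1 := sub_pos.2 (mod_cast hq)
  rw [cramerFactor_sub_one hq]
  split_ifs
  · have hneg : ((q : ℝ) - 1)⁻¹ - q / (q - 1) = -1 := by field_simp; ring
    rw [hneg, abs_neg, abs_one]; field_simp; ring
  · rw [sub_zero, add_zero, abs_of_pos (by positivity)]

lemma abs_cramerFactor_sub_one_le (a : ZMod q) : |cramerFactor q a - 1| ≤ 1 := by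
  have : (2 : ℝ) ≤ q := by exact_mod_cast hq
  have : (0 : ℝ) < q - 1 := by linarith
  rw [abs_cramerFactor_sub_one hq]
  split_ifs
  · exact le_of_eq (by field_simp; ring)
  · rw [add_zero]; exact inv_le_one_of_one_le₀ (by linarith)

variable [NeZero q]

omit hq in
lemma expect_add_ite_eq_zero (a b : ℝ) :
    𝔼 x : ZMod q, (a + if x = 0 then b else 0) = a + b / q := by
  rw [expect_add_distrib, Fintype.expect_const, Fintype.expect_eq_sum_div_card, ZMod.card]
  simp

lemma expect_cramerFactor_sub_one : 𝔼 a : ZMod q, (cramerFactor q a - 1) = 0 := by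
  have (a : ZMod q) : cramerFactor q a - 1 =
      ((q : ℝ) - 1)⁻¹ + if a = 0 then -(q / ((q : ℝ) - 1)) else 0 := by
    rw [cramerFactor_sub_one hq]; split_ifs <;> ring
  simp only [*, expect_add_ite_eq_zero]
  field_simp; ring

lemma expect_abs_cramerFactor_sub_one : 𝔼 a : ZMod q, |cramerFactor q a - 1| = 2 / q := by
  have : (0 : ℝ) < q - 1 := sub_pos.2 (mod_cast hq)
  simp only [abs_cramerFactor_sub_one hq, expect_add_ite_eq_zero]
  field_simp; ring

variable {k : ℕ}

lemma expect_abs_cramerFactor_sub_one_mul {ω ω' : Fin k → Bool} (h : ω ≠ ω') :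
    𝔼 v : GowersCube k (ZMod q), |cramerFactor q (cubeVertex ω v) - 1| *
      |cramerFactor q (cubeVertex ω' v) - 1| = 4 / (q : ℝ) ^ 2 := calc
  𝔼 v : GowersCube k (ZMod q), |cramerFactor q (cubeVertex ω v) - 1| *
      |cramerFactor q (cubeVertex ω' v) - 1|
    = 𝔼 a : ZMod q × ZMod q, |cramerFactor q a.1 - 1| * |cramerFactor q a.2 - 1| :=
      expect_comp_of_surjective _ (cubeVertex_prod_surjective h)
        fun a : ZMod q × ZMod q => |cramerFactor q a.1 - 1| * |cramerFactor q a.2 - 1|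
  _ = (2 / q) * (2 / q) := by
      rw [← univ_product_univ, expect_product]
      simp only [← mul_expect, ← expect_mul, expect_abs_cramerFactor_sub_one hq]
  _ = 4 / (q : ℝ) ^ 2 := by ring

lemma abs_expect_prod_cramerFactor_sub_one_le_of_nonempty {U : Finset (Fin k → Bool)}
    (hU : U.Nonempty) :
    |𝔼 v : GowersCube k (ZMod q), ∏ ω ∈ U, (cramerFactor q (cubeVertex ω v) - 1)| ≤
      4 / (q : ℝ) ^ 2 := by
  obtain ⟨ω, rfl⟩ | ⟨ω, hω, ω', hω', hne⟩ := hU.exists_eq_singleton_or_nontrivial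
  · simp only [prod_singleton]
    rw [expect_comp_of_surjective (cubeVertex ω) (cubeVertex_surjective ω)
      fun a : ZMod q => cramerFactor q a - 1, expect_cramerFactor_sub_one hq, abs_zero]
    positivity
  · rw [← expect_abs_cramerFactor_sub_one_mul hq hne]
    refine (abs_expect_le _ _).trans (expect_le_expect fun v _ => ?_)
    have hpair : {ω, ω'} ⊆ U := insert_subset hω (singleton_subset_iff.2 hω')
    rw [abs_prod, ← prod_sdiff hpair, prod_pair hne]
    exact mul_le_of_le_one_left (by positivity)
      (prod_le_one (fun _ _ => abs_nonneg _) fun _ _ => abs_cramerFactor_sub_one_le hq _)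

/-- The constant in the estimate `1 + O(1 / q ^ 2)` for the Gowers correlations of the local factor
at `q`. -/
def localConst (k : ℕ) : ℝ := 2 ^ 2 ^ k * 4

omit hq [NeZero q] in
lemma localConst_nonneg : 0 ≤ localConst k := by unfold localConst; positivity

lemma abs_expect_prod_cramerFactor_sub_one_le (U : Finset (Fin k → Bool)) :
    |𝔼 v : GowersCube k (ZMod q), ∏ ω ∈ U, cramerFactor q (cubeVertex ω v) - 1| ≤
      localConst k / (q : ℝ) ^ 2 := by
  have expand : 𝔼 v : GowersCube k (ZMod q), ∏ ω ∈ U, cramerFactor q (cubeVertex ω v) - 1 =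
      ∑ V ∈ U.powerset.erase ∅,
        𝔼 v : GowersCube k (ZMod q), ∏ ω ∈ V, (cramerFactor q (cubeVertex ω v) - 1) := by
    have (v : GowersCube k (ZMod q)) : ∏ ω ∈ U, cramerFactor q (cubeVertex ω v) =
        ∑ V ∈ U.powerset, ∏ ω ∈ V, (cramerFactor q (cubeVertex ω v) - 1) := by
      simp only [← prod_one_add, add_sub_cancel]
    simp only [this, expect_sum_comm]
    rw [← add_sum_erase _ _ (empty_mem_powerset U)]
    simp only [prod_empty, Fintype.expect_const, add_sub_cancel_left]
  have hcard : #(U.powerset.erase ∅) ≤ 2 ^ 2 ^ k := calc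
    #(U.powerset.erase ∅) ≤ 2 ^ #U := (card_le_card (erase_subset _ _)).trans_eq (card_powerset U)
    _ ≤ 2 ^ 2 ^ k := by
      gcongr
      · exact one_le_two
      · exact (card_le_univ U).trans_eq (by simp)
  rw [expand]
  calc |∑ V ∈ U.powerset.erase ∅, 𝔼 v : GowersCube k (ZMod q),
        ∏ ω ∈ V, (cramerFactor q (cubeVertex ω v) - 1)|
      ≤ #(U.powerset.erase ∅) • (4 / (q : ℝ) ^ 2) :=
        (abs_sum_le_sum_abs _ _).trans <| sum_le_card_nsmul _ _ _ fun V hV =>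
          abs_expect_prod_cramerFactor_sub_one_le_of_nonempty hq
            (nonempty_iff_ne_empty.2 (ne_of_mem_erase hV))
    _ = #(U.powerset.erase ∅) * 4 / (q : ℝ) ^ 2 := by rw [nsmul_eq_mul, mul_div_assoc]
    _ ≤ localConst k / (q : ℝ) ^ 2 := by
        unfold localConst
        gcongr
        exact_mod_cast hcard

end LocalFactors

section CramerProducts

variable {ι : Type*} {P : ι → ℕ}

/-- The Cramér model `∏ i ∈ S, (P i / (P i - 1)) 1_{P i ∤ n}`, as a function of the residues of `n`
modulo the `P i`. -/
noncomputable def cramerProd (P : ι → ℕ) (S : Finset ι) (b : ∀ i, ZMod (P i)) : ℝ :=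
  ∏ i ∈ S, cramerFactor (P i) (b i)

/-- The sieve weights `μ(d) ∏_{i ∈ S} P i / (P i - 1)`, for `d ∣ ∏_{i ∈ S} P i`, exhibiting the
Cramér model as a divisor sum. -/
noncomputable def cramerCoeff (P : ι → ℕ) (S J : Finset ι) : ℝ :=
  if J ⊆ S then (-1) ^ #J * ∏ i ∈ S, (P i : ℝ) / (P i - 1) else 0

lemma cramerProd_eq_divisorSum [Fintype ι] (S : Finset ι) (b : ∀ i, ZMod (P i)) :
    cramerProd P S b = divisorSum (cramerCoeff P S) (zeroSet b) := by
  have hsum : divisorSum (cramerCoeff P S) (zeroSet b) =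
      (∑ J ∈ (zeroSet b ∩ S).powerset, (-1) ^ #J) * ∏ i ∈ S, (P i : ℝ) / (P i - 1) := by
    simp only [divisorSum, cramerCoeff, ← sum_filter, ← sum_mul]
    congr 1
    refine sum_congr ?_ fun _ _ => rfl
    ext J
    rw [mem_filter, mem_powerset, mem_powerset, subset_inter_iff]
  have halt : ∑ J ∈ (zeroSet b ∩ S).powerset, (-1 : ℝ) ^ #J =
      if zeroSet b ∩ S = ∅ then 1 else 0 := by
    exact_mod_cast sum_powerset_neg_one_pow_card (x := zeroSet b ∩ S)
  rw [hsum, halt]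
  split_ifs with h
  · rw [one_mul]
    refine prod_congr rfl fun i hi => if_neg fun hbi => ?_
    exact notMem_empty i (h ▸ mem_inter.2 ⟨mem_zeroSet.2 hbi, hi⟩)
  · obtain ⟨i, hi⟩ := nonempty_iff_ne_empty.2 h
    rw [mem_inter, mem_zeroSet] at hi
    rw [zero_mul]
    exact prod_eq_zero hi.2 (if_pos hi.1)

lemma cramerProd_sub_cramerProd [Fintype ι] (S₁ S₂ : Finset ι) (b : ∀ i, ZMod (P i)) :
    cramerProd P S₁ b - cramerProd P S₂ b =
      divisorSum (fun J => cramerCoeff P S₁ J - cramerCoeff P S₂ J) (zeroSet b) := by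
  simp only [cramerProd_eq_divisorSum, divisorSum, sum_sub_distrib]

lemma exists_cramerCoeff_eq_neg_one_pow_mul (hP : ∀ i, 1 < P i) (hinj : Injective P) {n : ℕ}
    (hn : 1 ≤ n) (hPn : ∀ i, P i ≤ n) (S J : Finset ι) :
    ∃ a ∈ Set.Icc (0 : ℝ) n, cramerCoeff P S J = (-1) ^ #J * a := by
  unfold cramerCoeff
  split_ifs
  · refine ⟨_, ⟨prod_nonneg fun i _ => zero_le_one.trans (one_le_div_sub_one (hP i)), ?_⟩, rfl⟩
    rw [← prod_image (f := fun p : ℕ => (p : ℝ) / (p - 1)) hinj.injOn]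
    exact prod_div_sub_one_le hn (image_subset_iff.2 fun i _ => mem_Icc.2 ⟨hP i, hPn i⟩)
  · exact ⟨0, by simp, (mul_zero _).symm⟩

lemma abs_cramerCoeff_sub_cramerCoeff_le (hP : ∀ i, 1 < P i) (hinj : Injective P) {n : ℕ}
    (hn : 1 ≤ n) (hPn : ∀ i, P i ≤ n) (S₁ S₂ J : Finset ι) :
    |cramerCoeff P S₁ J - cramerCoeff P S₂ J| ≤ n := by
  obtain ⟨a, ha, hS₁⟩ := exists_cramerCoeff_eq_neg_one_pow_mul hP hinj hn hPn S₁ J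
  obtain ⟨b, hb, hS₂⟩ := exists_cramerCoeff_eq_neg_one_pow_mul hP hinj hn hPn S₂ J
  rw [hS₁, hS₂, ← mul_sub, abs_mul, abs_neg_one_pow, one_mul]
  simpa using abs_sub_le_of_nonneg_of_le ha.1 ha.2 hb.1 hb.2

variable [Fintype ι] {k : ℕ}

lemma expect_prod_cubeMap_eval {R : ι → Type*} [∀ i, AddCommGroup (R i)] [∀ i, Fintype (R i)]
    (f : ∀ i, GowersCube k (R i) → ℝ) :
    𝔼 y : GowersCube k (∀ i, R i), ∏ i, f i (cubeMap (Pi.evalAddMonoidHom R i) y) =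
      ∏ i, 𝔼 v, f i v := by
  let e : GowersCube k (∀ i, R i) ≃ ∀ i, GowersCube k (R i) :=
    { toFun := fun y i => cubeMap (Pi.evalAddMonoidHom R i) y
      invFun := fun v => (fun i => (v i).1, fun j i => (v i).2 j)
      left_inv := fun _ => rfl
      right_inv := fun _ => rfl }
  rw [← expect_prod_apply]
  exact Fintype.expect_equiv e _ _ fun _ => rfl

variable [∀ i, NeZero (P i)]

lemma expect_prod_cramerProd_cubeVertex (S : (Fin k → Bool) → Finset ι) :
    𝔼 y : GowersCube k (∀ i, ZMod (P i)), ∏ ω, cramerProd P (S ω) (cubeVertex ω y) =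
      ∏ i, 𝔼 v : GowersCube k (ZMod (P i)),
        ∏ ω with i ∈ S ω, cramerFactor (P i) (cubeVertex ω v) := by
  rw [← expect_prod_cubeMap_eval]
  refine expect_congr rfl fun y _ => ?_
  simp only [prod_filter, cubeVertex_cubeMap, cramerProd]
  rw [prod_comm]
  exact prod_congr rfl fun ω _ => by rw [prod_ite_mem, univ_inter]; rfl

section LocalMean

variable (hP : ∀ i, 1 < P i) (hinj : Injective P) {m : ℝ} (hm : 1 ≤ m)
include hP hinj

omit [Fintype ι] in
lemma abs_prod_expect_prod_cramerFactor_le (s : Finset ι) (U : ι → Finset (Fin k → Bool)) :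
    |∏ i ∈ s, 𝔼 v : GowersCube k (ZMod (P i)), ∏ ω ∈ U i, cramerFactor (P i) (cubeVertex ω v)| ≤
      Real.exp (2 * localConst k) := by
  have := abs_prod_sub_one_le_exp (s := s) hinj.injOn one_pos localConst_nonneg
    (fun i _ => mod_cast (hP i).le) fun i _ => abs_expect_prod_cramerFactor_sub_one_le (hP i) (U i)
  rw [div_one] at this
  linarith [abs_sub_abs_le_abs_sub (∏ i ∈ s, 𝔼 v : GowersCube k (ZMod (P i)),
    ∏ ω ∈ U i, cramerFactor (P i) (cubeVertex ω v)) 1, abs_one (α := ℝ)]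

include hm

omit [Fintype ι] in
lemma abs_prod_expect_prod_cramerFactor_sub_one_le {s : Finset ι} (hs : ∀ i ∈ s, m ≤ P i)
    (U : ι → Finset (Fin k → Bool)) :
    |∏ i ∈ s, 𝔼 v : GowersCube k (ZMod (P i)), ∏ ω ∈ U i, cramerFactor (P i) (cubeVertex ω v) - 1| ≤
      2 * localConst k * Real.exp (2 * localConst k) / m := by
  have hD := localConst_nonneg (k := k)
  calc |∏ i ∈ s, 𝔼 v : GowersCube k (ZMod (P i)),
          ∏ ω ∈ U i, cramerFactor (P i) (cubeVertex ω v) - 1|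
      ≤ Real.exp (2 * localConst k / m) - 1 :=
        abs_prod_sub_one_le_exp hinj.injOn (by linarith) hD hs fun i _ =>
          abs_expect_prod_cramerFactor_sub_one_le (hP i) (U i)
    _ ≤ 2 * localConst k / m * Real.exp (2 * localConst k / m) := exp_sub_one_le_mul_exp _
    _ ≤ 2 * localConst k / m * Real.exp (2 * localConst k) := by
        gcongr
        exact div_le_self (by positivity) hm
    _ = 2 * localConst k * Real.exp (2 * localConst k) / m := by ring

lemma abs_expect_prod_cramerProd_sub_le {S : (Fin k → Bool) → Finset ι}
    (hS : ∀ ω i, P i < m → i ∈ S ω) :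
    |𝔼 y : GowersCube k (∀ i, ZMod (P i)), ∏ ω, cramerProd P (S ω) (cubeVertex ω y) -
      ∏ i with P i < m, 𝔼 v : GowersCube k (ZMod (P i)), ∏ ω, cramerFactor (P i) (cubeVertex ω v)| ≤
      Real.exp (2 * localConst k) * (2 * localConst k * Real.exp (2 * localConst k) / m) := by
  rw [expect_prod_cramerProd_cubeVertex, ← prod_filter_mul_prod_filter_not univ fun i => P i < m]
  have small : ∏ i with P i < m, 𝔼 v : GowersCube k (ZMod (P i)),
        ∏ ω with i ∈ S ω, cramerFactor (P i) (cubeVertex ω v) =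
      ∏ i with P i < m, 𝔼 v : GowersCube k (ZMod (P i)),
        ∏ ω, cramerFactor (P i) (cubeVertex ω v) := by
    refine prod_congr rfl fun i hi => ?_
    rw [filter_true_of_mem fun ω _ => hS ω i (mem_filter.1 hi).2]
  rw [small, ← mul_sub_one, abs_mul]
  gcongr
  · exact abs_prod_expect_prod_cramerFactor_le hP hinj _ fun _ => univ
  · exact abs_prod_expect_prod_cramerFactor_sub_one_le hP hinj hm
      (fun i hi => not_lt.1 (mem_filter.1 hi).2) _

theorem abs_expect_prod_cramerProd_sub_cramerProd_le {S₁ S₂ : Finset ι}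
    (hS₁ : ∀ i, P i < m → i ∈ S₁) (hS₂ : ∀ i, P i < m → i ∈ S₂) :
    |𝔼 y : GowersCube k (∀ i, ZMod (P i)),
      ∏ ω, (cramerProd P S₁ (cubeVertex ω y) - cramerProd P S₂ (cubeVertex ω y))| ≤
      2 ^ 2 ^ k * (Real.exp (2 * localConst k) *
        (2 * localConst k * Real.exp (2 * localConst k) / m)) := by
  have expand (y : GowersCube k (∀ i, ZMod (P i))) :
      ∏ ω, (cramerProd P S₁ (cubeVertex ω y) - cramerProd P S₂ (cubeVertex ω y)) =
        ∑ T ∈ (univ : Finset (Fin k → Bool)).powerset, (-1) ^ #T *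
          ∏ ω, cramerProd P (if ω ∈ T then S₂ else S₁) (cubeVertex ω y) := by
    rw [prod_sub]
    refine sum_congr rfl fun T _ => ?_
    simp only [apply_ite (cramerProd P), ite_apply]
    rw [prod_ite, filter_mem_eq_inter, filter_notMem_eq_sdiff, univ_inter]
    ring
  simp only [expand, expect_sum_comm, ← mul_expect]
  refine (abs_alternating_sum_powerset_le univ_nonempty fun T _ =>
    abs_expect_prod_cramerProd_sub_le hP hinj hm fun ω i hi => ?_).trans_eq (by simp)
  split_ifs
  · exact hS₂ i hi
  · exact hS₁ i hi

end LocalMean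

end CramerProducts

section CramerSieve

variable {ι : Type*} [Fintype ι] {P : ι → ℕ} {n : ℕ}

lemma prod_one_add_inv_le (hP : ∀ i, 1 < P i) (hinj : Injective P) (hn : 1 ≤ n)
    (hPn : ∀ i, P i ≤ n) : ∏ i, (1 + (P i : ℝ)⁻¹) ≤ n := by
  have hle (i : ι) : 1 + (P i : ℝ)⁻¹ ≤ P i / (P i - 1) := by
    have : (0 : ℝ) < P i - 1 := sub_pos.2 (mod_cast hP i)
    have hpos : (0 : ℝ) < P i := by linarith
    rw [le_div_iff₀ this, add_mul, mul_sub (P i : ℝ)⁻¹, inv_mul_cancel₀ hpos.ne']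
    linarith [inv_pos.2 hpos]
  calc ∏ i, (1 + (P i : ℝ)⁻¹) ≤ ∏ i, (P i : ℝ) / (P i - 1) :=
        prod_le_prod (fun _ _ => by positivity) fun i _ => hle i
    _ = ∏ p ∈ univ.image P, (p : ℝ) / (p - 1) := by rw [prod_image hinj.injOn]
    _ ≤ n := prod_div_sub_one_le hn (image_subset_iff.2 fun i _ => mem_Icc.2 ⟨hP i, hPn i⟩)

lemma card_add_one_le (hP : ∀ i, 1 < P i) (hinj : Injective P) (hn : 1 ≤ n)
    (hPn : ∀ i, P i ≤ n) : Fintype.card ι + 1 ≤ n := by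
  have hcard : #(univ.image P) ≤ #(Icc 2 n) :=
    card_le_card (image_subset_iff.2 fun i _ => mem_Icc.2 ⟨hP i, hPn i⟩)
  rw [card_image_of_injective _ hinj, card_univ, Nat.card_Icc] at hcard
  lia

omit [Fintype ι] in
lemma injective_of_pairwise_coprime (hP : ∀ i, 1 < P i) (hcop : Pairwise (onFun Nat.Coprime P)) :
    Injective P := fun i j hij => by
  by_contra hne
  have hself : Nat.Coprime (P i) (P j) := hcop hne
  rw [← hij, Nat.coprime_self] at hself
  exact (hP i).ne' hself

/-- The exponent of the sieving level in the error terms of the `k`-dimensional sieve. -/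
def sieveExponent (k : ℕ) : ℕ := 2 ^ k + 3 ^ 2 ^ k

/-- The constant in the error terms of the `k`-dimensional sieve. -/
def sieveConst (k : ℕ) : ℝ :=
  (cubeRatio k + 1) * (2 ^ k) ^ 2 + 2 * (2 ^ k * cubeRatio k * (k + 1))

lemma sieveConst_pos (k : ℕ) : 0 < sieveConst k := by
  have := cubeRatio_pos (k := k)
  unfold sieveConst
  positivity

lemma sieve_error_le {k r : ℕ} {n M x a : ℝ} (hn : 1 ≤ n) (hM : 0 ≤ M) (hx₀ : 0 ≤ x) (hx : x ≤ n)
    (ha₀ : 0 ≤ a) (ha : a ≤ n) :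
    (cubeRatio k + 1) * ((2 ^ k) ^ 2 * (1 / 2) ^ r * n ^ 2 ^ k * x ^ (3 ^ 2 ^ k - 1)) +
      (a ^ r * n) ^ 2 ^ k * (2 * (2 ^ k * cubeRatio k * ((k + 1) * n ^ (2 ^ k * r) / M))) ≤
      sieveConst k *
        ((1 / 2) ^ r * n ^ sieveExponent k + n ^ (sieveExponent k * (r + 1)) / M) := by
  have hK := cubeRatio_pos (k := k)
  have hdensity : n ^ 2 ^ k * x ^ (3 ^ 2 ^ k - 1) ≤ n ^ sieveExponent k := by
    calc n ^ 2 ^ k * x ^ (3 ^ 2 ^ k - 1) ≤ n ^ 2 ^ k * n ^ (3 ^ 2 ^ k - 1) := by gcongr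
      _ = n ^ (2 ^ k + (3 ^ 2 ^ k - 1)) := (pow_add _ _ _).symm
      _ ≤ n ^ sieveExponent k :=
        pow_le_pow_right₀ hn (Nat.add_le_add_left (Nat.sub_le _ _) _)
  have hexp : 2 ^ k * (r + 1) + 2 ^ k * r ≤ sieveExponent k * (r + 1) := by
    rw [sieveExponent, add_mul]
    exact Nat.add_le_add_left
      (Nat.mul_le_mul (Nat.lt_pow_self (by norm_num)).le r.le_succ) _
  have hlevel : (a ^ r * n) ^ 2 ^ k * n ^ (2 ^ k * r) ≤ n ^ (sieveExponent k * (r + 1)) := by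
    calc (a ^ r * n) ^ 2 ^ k * n ^ (2 ^ k * r) ≤ (n ^ r * n) ^ 2 ^ k * n ^ (2 ^ k * r) := by gcongr
      _ = n ^ (2 ^ k * (r + 1) + 2 ^ k * r) := by
        rw [pow_add n (2 ^ k * (r + 1)), ← pow_succ, ← pow_mul, mul_comm (r + 1)]
      _ ≤ n ^ (sieveExponent k * (r + 1)) := pow_le_pow_right₀ hn hexp
  calc _ = (cubeRatio k + 1) * (2 ^ k) ^ 2 * ((1 / 2) ^ r * (n ^ 2 ^ k * x ^ (3 ^ 2 ^ k - 1))) +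
        2 * (2 ^ k * cubeRatio k * (k + 1)) *
          ((a ^ r * n) ^ 2 ^ k * n ^ (2 ^ k * r) / M) := by ring
    _ ≤ (cubeRatio k + 1) * (2 ^ k) ^ 2 *
          ((1 / 2) ^ r * n ^ sieveExponent k + n ^ (sieveExponent k * (r + 1)) / M) +
        2 * (2 ^ k * cubeRatio k * (k + 1)) *
          ((1 / 2) ^ r * n ^ sieveExponent k + n ^ (sieveExponent k * (r + 1)) / M) := by
        gcongr
        · exact le_add_of_le_of_nonneg (by gcongr) (by positivity)
        · exact le_add_of_nonneg_of_le (by positivity) (by gcongr)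
    _ = _ := by unfold sieveConst; ring

variable {k M : ℕ}

theorem abs_expect_cubesIn_prod_cramerProd_sub_le [∀ i, NeZero (P i)] (hM : k + 1 ≤ M)
    (hP : ∀ i, 1 < P i) (hcop : Pairwise (onFun Nat.Coprime P)) (hn : 1 ≤ n) (hPn : ∀ i, P i ≤ n)
    (S₁ S₂ : Finset ι) (r : ℕ) :
    |𝔼 x ∈ cubesIn k M, ∏ ω, (cramerProd P S₁ (residues P (cubeVertex ω x)) -
        cramerProd P S₂ (residues P (cubeVertex ω x))) -
      𝔼 y : GowersCube k (∀ i, ZMod (P i)),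
        ∏ ω, (cramerProd P S₁ (cubeVertex ω y) - cramerProd P S₂ (cubeVertex ω y))| ≤
      sieveConst k *
        ((1 / 2) ^ r * n ^ sieveExponent k + n ^ (sieveExponent k * (r + 1)) / M) := by
  have hinj := injective_of_pairwise_coprime hP hcop
  simp only [cramerProd_sub_cramerProd]
  refine (abs_expect_prod_divisorSum_sub_le (r := r)
    (abs_cramerCoeff_sub_cramerCoeff_le hP hinj hn hPn S₁ S₂) (fun i => by positivity)
    (hasDivisorDensity_cubesIn hM hcop) hasDivisorDensity_residueCubes
    (abs_expect_cubesIn_pattern_sub_le hM hcop hn hPn)).trans ?_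
  have hcard : Fintype.card (Fin k → Bool) = 2 ^ k := by simp
  rw [hcard]
  push_cast
  exact sieve_error_le (mod_cast hn) (Nat.cast_nonneg M)
    (prod_nonneg fun _ _ => by positivity) (prod_one_add_inv_le hP hinj hn hPn) (by positivity)
    (mod_cast card_add_one_le hP hinj hn hPn)

end CramerSieve

section PrimeModuli

variable {n : ℕ}

lemma cramer_eq_cramerProd {w : ℝ} (hw : ∀ p : ℕ, (p : ℝ) < w → p ≤ n) (a : ℤ) :
    cramer w a = cramerProd (fun p : Nat.primesLE n => (p : ℕ)) {p | (p : ℝ) < w}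
      (residues _ a) := by
  symm
  refine prod_bij (fun p _ => (p : ℕ)) (fun p hp => ?_) (fun _ _ _ _ h => Subtype.ext h)
    (fun p hp => ?_) fun p _ => ?_
  · have hpw : (p : ℝ) < w := (mem_filter.1 hp).2
    have hceil : (p : ℕ) ≤ ⌈w⌉₊ := by exact_mod_cast hpw.le.trans (Nat.le_ceil w)
    exact mem_filter.2 ⟨mem_range.2 (Nat.lt_succ_of_le hceil), (Nat.mem_primesLE.1 p.2).2, hpw⟩
  · obtain ⟨-, hprime, hpw⟩ := mem_filter.1 hp
    exact ⟨⟨p, Nat.mem_primesLE.2 ⟨hw p hpw, hprime⟩⟩, mem_filter.2 ⟨mem_univ _, hpw⟩, rfl⟩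
  · simp only [cramerFactor, residues_apply, ZMod.intCast_zmod_eq_zero_iff_dvd]

end PrimeModuli

/-- The constant in the bound for the Gowers averages of differences of Cramér models. -/
noncomputable def cramerConst (k : ℕ) : ℝ :=
  2 ^ 2 ^ k * (Real.exp (2 * localConst k) * (2 * localConst k * Real.exp (2 * localConst k))) +
    sieveConst k

lemma cramerConst_pos (k : ℕ) : 0 < cramerConst k := by
  have := localConst_nonneg (k := k)
  have := sieveConst_pos k
  unfold cramerConst
  positivity

theorem abs_expect_cubesIn_prod_cramer_sub_cramer_le {k M : ℕ} (hM : k + 1 ≤ M) {Q w z : ℝ}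
    (hw : 1 ≤ w) (hwQ : w ≤ Q) (hz : 1 ≤ z) (hzQ : z ≤ Q) (r : ℕ) :
    |𝔼 x ∈ cubesIn k M, ∏ ω, (cramer w (cubeVertex ω x) - cramer z (cubeVertex ω x))| ≤
      cramerConst k * ((min w z)⁻¹ +
        ((1 / 2) ^ r * Q ^ sieveExponent k + Q ^ (sieveExponent k * (r + 1)) / M)) := by
  set n := ⌊Q⌋₊
  set P : Nat.primesLE n → ℕ := fun p => p
  have hprime (p : Nat.primesLE n) : (P p).Prime := (Nat.mem_primesLE.1 p.2).2
  have (p : Nat.primesLE n) : NeZero (P p) := ⟨(hprime p).ne_zero⟩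
  have hcop : Pairwise (onFun Nat.Coprime P) := fun p q hpq =>
    (Nat.coprime_primes (hprime p) (hprime q)).2 (Subtype.coe_ne_coe.2 hpq)
  have hn : 1 ≤ n := Nat.le_floor (by simpa using hw.trans hwQ)
  have hle {v : ℝ} (hv : v ≤ Q) (p : ℕ) (hp : (p : ℝ) < v) : p ≤ n := Nat.le_floor (hp.le.trans hv)
  have hlocal := abs_expect_prod_cramerProd_sub_cramerProd_le (k := k)
    (S₁ := {p | (P p : ℝ) < w}) (S₂ := {p | (P p : ℝ) < z}) (fun p => (hprime p).one_lt)
    Subtype.val_injective (le_min hw hz)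
    (fun p hp => mem_filter.2 ⟨mem_univ _, hp.trans_le (min_le_left w z)⟩)
    fun p hp => mem_filter.2 ⟨mem_univ _, hp.trans_le (min_le_right w z)⟩
  have hsieve := abs_expect_cubesIn_prod_cramerProd_sub_le hM (fun p => (hprime p).one_lt) hcop hn
    (fun p => (Nat.mem_primesLE.1 p.2).1) {p | (P p : ℝ) < w} {p | (P p : ℝ) < z} r
  have hlocalConst := localConst_nonneg (k := k)
  have hsieveConst := sieveConst_pos k
  have hnQ : (n : ℝ) ≤ Q := Nat.floor_le (by linarith)
  simp only [cramer_eq_cramerProd (hle hwQ), cramer_eq_cramerProd (hle hzQ)]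
  refine (sub_le_iff_le_add.1 (abs_sub_abs_le_abs_sub _ _)).trans
    ((add_comm _ _).trans_le ((add_le_add hlocal hsieve).trans ?_))
  rw [mul_add (cramerConst k), div_eq_mul_inv _ (min w z), ← mul_assoc (Real.exp _),
    ← mul_assoc (2 ^ 2 ^ k)]
  gcongr
  · exact le_add_of_nonneg_right hsieveConst.le
  · exact (cramerConst_pos k).le
  · exact le_add_of_nonneg_left (by positivity)

section Asymptotics

open Filter Real

lemma half_pow_ceil_sq_mul_exp_pow_le {E : ℕ} {u : ℝ} (hu : 2 * (E + 1) ≤ u) :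
    (1 / 2) ^ ⌈u ^ 2⌉₊ * exp u ^ E ≤ exp (-u) := by
  have hhalf : (1 / 2 : ℝ) ≤ exp (-(1 / 2)) := by linarith [add_one_le_exp (-(1 / 2) : ℝ)]
  have hceil := Nat.le_ceil (u ^ 2)
  calc (1 / 2) ^ ⌈u ^ 2⌉₊ * exp u ^ E ≤ exp (-(1 / 2)) ^ ⌈u ^ 2⌉₊ * exp u ^ E := by gcongr
    _ = exp (⌈u ^ 2⌉₊ * -(1 / 2) + E * u) := by rw [← exp_nat_mul, ← exp_nat_mul, ← exp_add]
    _ ≤ exp (-u) := exp_le_exp.2 (by nlinarith [Nat.cast_nonneg (α := ℝ) E])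

lemma exp_pow_mul_ceil_sq_add_one_le {E : ℕ} {u : ℝ} (hu : 3 * E + 1 ≤ u) :
    exp u ^ (E * (⌈u ^ 2⌉₊ + 1)) ≤ exp (u ^ 10) * exp (-u) := by
  have hu₁ : 1 ≤ u := by linarith
  have hceil : (⌈u ^ 2⌉₊ : ℝ) + 1 ≤ 3 * u ^ 2 := by
    linarith [Nat.ceil_lt_add_one (sq_nonneg u), one_le_pow₀ hu₁ (n := 2)]
  have hpow : u ^ 4 ≤ u ^ 10 := pow_le_pow_right₀ hu₁ (by norm_num)
  have hpow' : u ≤ u ^ 3 := le_self_pow₀ hu₁ (by norm_num)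
  rw [← exp_nat_mul, ← exp_add, exp_le_exp]
  push_cast
  calc E * (⌈u ^ 2⌉₊ + 1) * u ≤ E * (3 * u ^ 2) * u := by gcongr
    _ = 3 * E * u ^ 3 := by ring
    _ ≤ (u - 1) * u ^ 3 := by gcongr; linarith
    _ ≤ u ^ 10 + -u := by linarith [pow_succ u 3]

lemma eventually_sieve_error_le (E : ℕ) : ∀ᶠ N : ℝ in atTop, ∃ r : ℕ,
    (1 / 2) ^ r * Qparam N ^ E + Qparam N ^ (E * (r + 1)) / ⌊N⌋₊ ≤ (log N)⁻¹ := by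
  have hdecay : ∀ᶠ u : ℝ in atTop, u ^ 10 * exp (-u) < 1 / 3 :=
    (tendsto_pow_mul_exp_neg_atTop_nhds_zero 10).eventually_lt_const (by norm_num)
  have hroot : Tendsto (fun N => log N ^ (1 / 10 : ℝ)) atTop atTop :=
    (tendsto_rpow_atTop (by norm_num)).comp tendsto_log_atTop
  filter_upwards [hroot.eventually hdecay, hroot.eventually_ge_atTop (3 * E + 2),
    eventually_ge_atTop 1] with N hdecay hu hN
  rw [show Qparam N = exp (log N ^ (1 / 10 : ℝ)) from rfl]
  have hlog : (log N ^ (1 / 10 : ℝ)) ^ 10 = log N := by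
    rw [← rpow_mul_natCast (log_nonneg hN)]; norm_num
  generalize log N ^ (1 / 10 : ℝ) = u at *
  have hu₀ : 0 < u := by linarith
  have hNexp : exp (u ^ 10) = N := by rw [hlog, exp_log (by linarith)]
  have hfloor : N ≤ 2 * ⌊N⌋₊ := by
    have : (1 : ℝ) ≤ ⌊N⌋₊ := mod_cast Nat.le_floor (by simpa using hN)
    linarith [Nat.lt_floor_add_one N]
  refine ⟨⌈u ^ 2⌉₊, ?_⟩
  calc _ ≤ exp (-u) + N * exp (-u) / (N / 2) := by
        gcongr
        · exact half_pow_ceil_sq_mul_exp_pow_le (by linarith)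
        · exact hNexp ▸ exp_pow_mul_ceil_sq_add_one_le (by linarith)
        · linarith
    _ = 3 * exp (-u) := by field_simp; norm_num
    _ ≤ (u ^ 10)⁻¹ := by
        rw [← one_div, le_div_iff₀ (by positivity)]
        linarith
    _ = (log N)⁻¹ := by rw [hlog]

end Asymptotics

section GowersNorm

variable {k : ℕ} {N : ℝ}

lemma iterate_conj_ofReal (j : ℕ) (x : ℝ) : (⇑(starRingEnd ℂ))^[j] (x : ℂ) = x :=
  Function.iterate_fixed (Complex.conj_ofReal x) j

lemma truncN_ofReal (hN : 0 ≤ N) (g : ℤ → ℝ) (a : ℤ) :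
    truncN N (fun n => (g n : ℂ)) a = ((if a ∈ Icc 1 (⌊N⌋₊ : ℤ) then g a else 0 : ℝ) : ℂ) := by
  simp only [truncN, mem_Icc, Int.natCast_floor_eq_floor hN, Int.le_floor]
  split_ifs <;> simp

lemma gowersProd_truncN_ofReal (hN : 0 ≤ N) (g : ℤ → ℝ) (x : GowersCube k ℤ) :
    gowersProd k (truncN N fun n => (g n : ℂ)) x.1 x.2 =
      ((if x ∈ cubesIn k ⌊N⌋₊ then ∏ ω, g (cubeVertex ω x) else 0 : ℝ) : ℂ) := by
  simp only [gowersProd, truncN_ofReal hN, iterate_conj_ofReal, ← Complex.ofReal_prod,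
    prod_ite_zero, mem_cubesIn, mem_univ, true_implies]
  rfl

lemma tsum_gowersProd_truncN_ofReal (hN : 0 ≤ N) (g : ℤ → ℝ) :
    ∑' x : ℤ × (Fin k → ℤ), gowersProd k (truncN N fun n => (g n : ℂ)) x.1 x.2 =
      ((∑ x ∈ cubesIn k ⌊N⌋₊, ∏ ω, g (cubeVertex ω x) : ℝ) : ℂ) := by
  rw [Complex.ofReal_sum]
  refine (tsum_eq_sum (s := cubesIn k ⌊N⌋₊) fun x hx => ?_).trans (sum_congr rfl fun x hx => ?_)
  · rw [gowersProd_truncN_ofReal hN, if_neg hx, Complex.ofReal_zero]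
  · rw [gowersProd_truncN_ofReal hN, if_pos hx]

theorem gowersUN_ofReal_le (hN : k + 1 ≤ ⌊N⌋₊) (g : ℤ → ℝ) :
    gowersUN k N (fun n => (g n : ℂ)) ≤
      |𝔼 x ∈ cubesIn k ⌊N⌋₊, ∏ ω, g (cubeVertex ω x)| ^ ((1 : ℝ) / 2 ^ k) := by
  have hN₀ : 0 ≤ N := (Nat.pos_of_floor_pos (by lia)).le
  have hone : gowersTildeU k (truncN N fun _ => 1) =
      (#(cubesIn k ⌊N⌋₊) : ℝ) ^ ((1 : ℝ) / 2 ^ k) := by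
    have := tsum_gowersProd_truncN_ofReal (k := k) hN₀ fun _ => 1
    simp only [Complex.ofReal_one, prod_const_one, sum_const, nsmul_one] at this
    rw [gowersTildeU, this, Complex.ofReal_re]
  rw [gowersUN, hone, gowersTildeU, tsum_gowersProd_truncN_ofReal hN₀, Complex.ofReal_re,
    expect_eq_sum_div_card, abs_div, Nat.abs_cast,
    Real.div_rpow (abs_nonneg _) (Nat.cast_nonneg _)]
  refine div_le_div_of_nonneg_right ?_ (by positivity)
  exact (le_abs_self _).trans (Real.abs_rpow_le_abs_rpow _ _)

end GowersNorm

section Conclusion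

theorem gowersUN_cramer_sub_cramer_le {k : ℕ} {N Q w z : ℝ} (hN : k + 1 ≤ ⌊N⌋₊) (hw : 1 ≤ w)
    (hwQ : w ≤ Q) (hz : 1 ≤ z) (hzQ : z ≤ Q) (r : ℕ) :
    gowersUN k N (fun n => ((cramer w n : ℝ) : ℂ) - ((cramer z n : ℝ) : ℂ)) ≤
      (cramerConst k * ((min w z)⁻¹ + ((1 / 2) ^ r * Q ^ sieveExponent k +
        Q ^ (sieveExponent k * (r + 1)) / ⌊N⌋₊))) ^ ((1 : ℝ) / 2 ^ k) := by
  simp only [← Complex.ofReal_sub]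
  exact (gowersUN_ofReal_le hN _).trans (Real.rpow_le_rpow (abs_nonneg _)
    (abs_expect_cubesIn_prod_cramer_sub_cramer_le hN hw hwQ hz hzQ r) (by positivity))

lemma rpow_mul_inv_min_add_inv_le {a w z l c : ℝ} (ha : 0 ≤ a) (hw : 0 < w) (hz : 0 < z)
    (hl : 0 < l) (hc₀ : 0 ≤ c) (hc₁ : c ≤ 1) :
    (a * ((min w z)⁻¹ + l⁻¹)) ^ c ≤ a ^ c * (l ^ (-c) + w ^ (-c) + z ^ (-c)) := by
  have hmin : (min w z)⁻¹ ^ c ≤ w ^ (-c) + z ^ (-c) := by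
    rw [Real.inv_rpow (le_min hw.le hz.le), ← Real.rpow_neg (le_min hw.le hz.le)]
    rcases min_choice w z with h | h <;> rw [h]
    · exact le_add_of_nonneg_right (by positivity)
    · exact le_add_of_nonneg_left (by positivity)
  have hmin₀ : 0 ≤ (min w z)⁻¹ := inv_nonneg.2 (le_min hw.le hz.le)
  rw [Real.mul_rpow ha (by positivity)]
  gcongr
  calc ((min w z)⁻¹ + l⁻¹) ^ c ≤ (min w z)⁻¹ ^ c + l⁻¹ ^ c :=
        Real.rpow_add_le_add_rpow hmin₀ (by positivity) hc₀ hc₁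
    _ ≤ w ^ (-c) + z ^ (-c) + l ^ (-c) :=
        add_le_add hmin (by rw [Real.inv_rpow hl.le, Real.rpow_neg hl.le])
    _ = l ^ (-c) + w ^ (-c) + z ^ (-c) := by ring

end Conclusion

end CramerModel

theorem cramer_model_gowers_stability (k : ℕ) (hk : 1 ≤ k) :
    ∃ c C : ℝ, 0 < c ∧ 0 < C ∧ ∃ N₀ : ℝ, ∀ N : ℝ, N₀ ≤ N →
      ∀ w z : ℝ, 2 ≤ w → w ≤ Qparam N → 2 ≤ z → z ≤ Qparam N →
        gowersUN k N (fun n => ((cramer w n : ℝ) : ℂ) - ((cramer z n : ℝ) : ℂ))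
          ≤ C * (Real.log N ^ (-c) + w ^ (-c) + z ^ (-c)) := by
  have hc : (1 : ℝ) / 2 ^ k ≤ 1 := div_le_one_of_le₀ (one_le_pow₀ one_le_two) (by positivity)
  have hconst := CramerModel.cramerConst_pos k
  obtain ⟨N₀, hN₀⟩ := Filter.eventually_atTop.1
    ((CramerModel.eventually_sieve_error_le (CramerModel.sieveExponent k)).and
      ((tendsto_nat_floor_atTop.eventually_ge_atTop (k + 1)).and
        (Filter.eventually_gt_atTop (1 : ℝ))))
  refine ⟨1 / 2 ^ k, CramerModel.cramerConst k ^ ((1 : ℝ) / 2 ^ k), by positivity,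
    Real.rpow_pos_of_pos hconst _, N₀, fun N hN w z hw hwQ hz hzQ => ?_⟩
  obtain ⟨⟨r, hr⟩, hkN, hN₁⟩ := hN₀ N hN
  have hlog : 0 < Real.log N := Real.log_pos hN₁
  have hw₀ : 0 < w := by linarith
  have hz₀ : 0 < z := by linarith
  have hQ : 0 ≤ Qparam N := (Real.exp_pos _).le
  calc _ ≤ _ := CramerModel.gowersUN_cramer_sub_cramer_le hkN (one_le_two.trans hw) hwQ
        (one_le_two.trans hz) hzQ r
    _ ≤ (CramerModel.cramerConst k * ((min w z)⁻¹ + (Real.log N)⁻¹)) ^ ((1 : ℝ) / 2 ^ k) := by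
        gcongr
    _ ≤ _ := CramerModel.rpow_mul_inv_min_add_inv_le hconst.le hw₀ hz₀ hlog (by positivity) hc
end

section
/- For every integer k ≥ 1 and every ε > 0 there is a constant C = C(k, ε) > 0 such that for every primitive real (quadratic) Dirichlet character χ of conductor q ≥ 1 one has ‖χ‖_{U^k(ℤ/qℤ)} ≤ C·q^{−1/2^{k+1} + ε}, where χ is viewed as a function on ℤ/qℤ. -/
open scoped Classical

noncomputable section

/-- The normalized Gowers norm `‖f‖_{U^k(G)}` of a function on a finite additive group `G`. -/
def gowersUAvg {G : Type*} [AddCommGroup G] (k : ℕ) (f : G → ℂ) : ℝ :=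
  ((∑' nh : G × (Fin k → G), gowersProd k f nh.1 nh.2).re / (Nat.card G : ℝ) ^ (k + 1)) ^
    ((1 : ℝ) / 2 ^ k)

end

/-!
The sum over parallelepipeds defining the `U^k` norm is multiplicative under `ℤ/abℤ ≃ ℤ/aℤ × ℤ/bℤ`
for coprime `a` and `b`, so everything reduces to prime powers. A quadratic character is primitive
modulo a power of an odd prime `p` only if that power is `p` itself, and modulo a power of two only
if that power is at most `8`; in the latter case the trivial bound suffices.

Modulo an odd prime `p` one has to sum the quadratic character over the values of
`∏ ω, (n + ω · h)`. All but `O(p ^ (k - 1))` of the `h` are nondegenerate, in the sense that `ω · h`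
vanishes only at `ω = 0`. For these, the number of factors being even, the substitution `n = 1 / y`
turns the product into a polynomial of odd degree less than `2 ^ k` in `y` (up to squares), and the
sum is `O(√p)`. This case of the Weil bound is proved by Stepanov's method: a nonzero polynomial of
controlled degree is made to vanish to high order wherever the character takes a given value.

Each prime factor of `q` thus saves a factor `√p` at the cost of a constant `K`, and the total cost
`K ^ ω(q)` is `O(q ^ ε)`.
-/

section Stepanov

open Polynomial Finset

section TwistedDerivative

variable {R : Type*} [CommRing R]

/-- The first order operator `r ↦ f r' + m f' r`. It describes `f · d/dX` on multiples of `f ^ m`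
(see `twistedDerivative_zero_mul_pow`) without leaving the ring of polynomials; the case `m = 0` is
`f · d/dX` itself. -/
noncomputable def twistedDerivative (f : R[X]) (m : ℕ) : R[X] →ₗ[R] R[X] :=
  LinearMap.mulLeft R f ∘ₗ derivative + LinearMap.mulLeft R ((m : R[X]) * derivative f)

theorem twistedDerivative_apply (f : R[X]) (m : ℕ) (r : R[X]) :
    twistedDerivative f m r = f * derivative r + m * derivative f * r :=
  rfl

theorem twistedDerivative_zero_mul_pow (f : R[X]) (m : ℕ) (r : R[X]) :
    twistedDerivative f 0 (r * f ^ m) = twistedDerivative f m r * f ^ m := by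
  simp only [twistedDerivative_apply]
  cases m with
  | zero => simp
  | succ m =>
    rw [derivative_mul, derivative_pow_succ, map_add, map_natCast, map_one]
    push_cast
    ring

theorem twistedDerivative_mul_of_derivative_eq_zero (f : R[X]) (m : ℕ) (r : R[X]) {g : R[X]}
    (hg : derivative g = 0) : twistedDerivative f m (r * g) = twistedDerivative f m r * g := by
  simp only [twistedDerivative_apply, derivative_mul, hg]
  ring

theorem twistedDerivative_zero_pow_add_mul_pow_mul (f : R[X]) (m k : ℕ) (r s : R[X]) {g : R[X]}
    (hg : derivative g = 0) :
    (twistedDerivative f 0 ^ k) ((r + s * f ^ m) * g) =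
      ((twistedDerivative f 0 ^ k) r + (twistedDerivative f m ^ k) s * f ^ m) * g := by
  induction k with
  | zero => rfl
  | succ k ih =>
    rw [pow_succ', Module.End.mul_apply, ih, twistedDerivative_mul_of_derivative_eq_zero _ _ _ hg,
      map_add, twistedDerivative_zero_mul_pow]
    simp only [pow_succ', Module.End.mul_apply]

theorem natDegree_twistedDerivative_le (f : R[X]) (m : ℕ) (r : R[X]) :
    (twistedDerivative f m r).natDegree ≤ r.natDegree + f.natDegree := by
  have hr : (f * derivative r).natDegree ≤ r.natDegree + f.natDegree := by
    have := natDegree_mul_le (p := f) (q := derivative r)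
    have := natDegree_derivative_le r
    lia
  have hf : ((m : R[X]) * derivative f * r).natDegree ≤ r.natDegree + f.natDegree := by
    have := natDegree_mul_le (p := (m : R[X]) * derivative f) (q := r)
    have := natDegree_mul_le (p := (m : R[X])) (q := derivative f)
    have := natDegree_derivative_le f
    have := natDegree_natCast (R := R) m
    lia
  exact natDegree_add_le_of_degree_le hr hf

theorem natDegree_twistedDerivative_pow_le (f : R[X]) (m k : ℕ) (r : R[X]) :
    ((twistedDerivative f m ^ k) r).natDegree ≤ r.natDegree + k * f.natDegree := by
  induction k with
  | zero => simp
  | succ k ih =>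
    rw [pow_succ', Module.End.mul_apply, add_one_mul, ← add_assoc]
    exact (natDegree_twistedDerivative_le f m _).trans (by gcongr)

theorem eval_twistedDerivative_pow_X_sub_C_pow_mul (f : R[X]) (m k : ℕ) (x : R) (u : R[X]) :
    ((twistedDerivative f m ^ k) ((X - C x) ^ k * u)).eval x =
      k.factorial * f.eval x ^ k * u.eval x := by
  induction k generalizing u with
  | zero => simp
  | succ k ih =>
    have hstep : twistedDerivative f m ((X - C x) ^ (k + 1) * u) = (X - C x) ^ k *
        (f * (C ((k + 1 : ℕ) : R) * u) +
          (X - C x) * (f * derivative u + (m : R[X]) * derivative f * u)) := by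
      rw [twistedDerivative_apply, derivative_mul, derivative_X_sub_C_pow, ← C_eq_natCast]
      simp only [Nat.add_sub_cancel]
      ring
    rw [pow_succ, Module.End.mul_apply, hstep, ih, Nat.factorial_succ]
    simp only [eval_add, eval_mul, eval_sub, eval_X, eval_C, sub_self, zero_mul, add_zero]
    push_cast
    ring

/-- The factorials have to be nonzero because ordinary derivatives cannot see a zero whose order is
at least the characteristic. -/
theorem X_sub_C_pow_dvd_of_eval_twistedDerivative_pow_eq_zero [IsDomain R] {f P : R[X]} {x : R}
    (m : ℕ) (hx : f.eval x ≠ 0) {l : ℕ} (hl : ∀ k < l, (k.factorial : R) ≠ 0)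
    (hP : ∀ k < l, ((twistedDerivative f m ^ k) P).eval x = 0) : (X - C x) ^ l ∣ P := by
  induction l with
  | zero => simp
  | succ l ih =>
    obtain ⟨u, rfl⟩ := ih (fun k hk ↦ hl k (by lia)) fun k hk ↦ hP k (by lia)
    have hu : u.eval x = 0 := by
      have := hP l l.lt_succ_self
      rw [eval_twistedDerivative_pow_X_sub_C_pow_mul] at this
      simpa [hl l l.lt_succ_self, hx] using this
    rw [pow_succ]
    exact mul_dvd_mul_left _ (dvd_iff_isRoot.2 hu)

end TwistedDerivative

theorem exists_ne_zero_forall_apply_eq_zero {K V W ι : Type*} [Field K] [AddCommGroup V]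
    [Module K V] [AddCommGroup W] [Module K W] [Fintype ι] (L : ι → V →ₗ[K] W)
    (U : Submodule K W) [FiniteDimensional K U] (hU : ∀ i v, L i v ∈ U)
    (hcard : Fintype.card ι * Module.finrank K U < Module.finrank K V) :
    ∃ v ≠ 0, ∀ i, L i v = 0 := by
  have : FiniteDimensional K V := Module.finite_of_finrank_pos (by lia)
  let Φ : V →ₗ[K] ι → U := LinearMap.pi fun i ↦ (L i).codRestrict U (hU i)
  obtain ⟨v, hv, hv0⟩ := Submodule.exists_mem_ne_zero_of_ne_bot
    (LinearMap.ker_ne_bot_of_finrank_lt (f := Φ) (by simpa [Module.finrank_pi_fintype] using hcard))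
  exact ⟨v, hv0, fun i ↦ congrArg Subtype.val (congrFun hv i)⟩

theorem mul_card_le_natDegree_of_X_sub_C_pow_dvd {K : Type*} [Field K] {P : K[X]} (hP : P ≠ 0)
    {S : Finset K} {l : ℕ} (hS : ∀ x ∈ S, (X - C x) ^ l ∣ P) : l * #S ≤ P.natDegree := by
  have hdvd : ∏ x ∈ S, (X - C x) ^ l ∣ P :=
    prod_dvd_of_coprime (fun x _ y _ hxy ↦
      (isCoprime_X_sub_C_of_isUnit_sub (sub_ne_zero.2 hxy).isUnit).pow) hS
  calc l * #S = (∏ x ∈ S, (X - C x) ^ l).natDegree := by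
        rw [natDegree_prod _ _ fun x _ ↦ pow_ne_zero _ (X_sub_C_ne_zero x)]
        simp [mul_comm]
    _ ≤ P.natDegree := natDegree_le_of_dvd hdvd hP

theorem eq_zero_of_mul_sq_eq_mul_sq {R : Type*} [CommRing R] [IsDomain R] {f g r s : R[X]}
    (hf : Odd f.natDegree) (hg : Even g.natDegree) (hg0 : g ≠ 0) (h : f * r ^ 2 = g * s ^ 2) :
    r = 0 ∧ s = 0 := by
  have hf0 : f ≠ 0 := by rintro rfl; simp at hf
  have hr : r = 0 := by
    by_contra hr
    have hs : s ≠ 0 := by rintro rfl; simp [hf0, hr] at h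
    have hdeg := congrArg natDegree h
    rw [natDegree_mul hf0 (pow_ne_zero _ hr), natDegree_mul hg0 (pow_ne_zero _ hs), natDegree_pow,
      natDegree_pow] at hdeg
    grind
  subst hr
  exact ⟨rfl, by simpa [hg0] using h.symm⟩

section AuxiliaryPolynomial

variable {F : Type*} [Field F] [Fintype F]

local notation "𝔮" => Fintype.card F

theorem X_pow_card_dvd_pow_card_sub_C (f : F[X]) : X ^ 𝔮 ∣ f ^ 𝔮 - C (f.coeff 0) := by
  have h : X ∣ f - C (f.coeff 0) := by rw [X_dvd_iff]; simp
  have := map_dvd (expand F 𝔮) h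
  rwa [map_sub, expand_X, expand_C, FiniteField.expand_card] at this

/-- A relation `r + s f ^ (𝔮 / 2) ≡ 0` modulo `X ^ 𝔮` gives `f r² ≡ f(0) s²`, since
`f ^ 𝔮 ≡ f(0)`; by the degree bounds this is an equality, which is absurd by parity of degrees. -/
theorem eq_zero_of_X_pow_card_dvd_add_mul_pow (hq : Odd 𝔮) {f r s : F[X]} (hf : Odd f.natDegree)
    (hf0 : f.coeff 0 ≠ 0) (hr : 2 * r.natDegree + f.natDegree < 𝔮) (hs : 2 * s.natDegree < 𝔮)
    (h : X ^ 𝔮 ∣ r + s * f ^ (𝔮 / 2)) : r = 0 ∧ s = 0 := by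
  have hpow : (f ^ (𝔮 / 2)) ^ 2 * f = f ^ 𝔮 := by
    rw [← pow_mul, ← pow_succ, Nat.div_two_mul_two_add_one_of_odd hq]
  have hdvd : X ^ 𝔮 ∣ f * r ^ 2 - C (f.coeff 0) * s ^ 2 := by
    have : f * r ^ 2 - C (f.coeff 0) * s ^ 2 = (r + s * f ^ (𝔮 / 2)) *
        (f * (r - s * f ^ (𝔮 / 2))) + (f ^ 𝔮 - C (f.coeff 0)) * s ^ 2 := by
      rw [← hpow]; ring
    rw [this]
    exact dvd_add (h.mul_right _) ((X_pow_card_dvd_pow_card_sub_C f).mul_right _)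
  have hdeg : (f * r ^ 2 - C (f.coeff 0) * s ^ 2).natDegree < 𝔮 := by
    have := natDegree_sub_le (f * r ^ 2) (C (f.coeff 0) * s ^ 2)
    have := natDegree_mul_le (p := f) (q := r ^ 2)
    have := natDegree_C_mul_le (f.coeff 0) (s ^ 2)
    have := natDegree_pow_le (p := r) (n := 2)
    have := natDegree_pow_le (p := s) (n := 2)
    lia
  have hzero := eq_zero_of_dvd_of_natDegree_lt hdvd (by rwa [natDegree_X_pow])
  exact eq_zero_of_mul_sq_eq_mul_sq hf (by simp) (C_ne_zero.2 hf0) (sub_eq_zero.1 hzero)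

/-- Stepanov's auxiliary polynomial. At a point `x` of `F` with `f(x) ^ (𝔮 / 2) = a` it takes the
same value as the polynomial `∑ j, (r j + a s j) X ^ j` of much smaller degree
(see `eval_stepanovPoly`). -/
noncomputable def stepanovPoly (f : F[X]) {J : ℕ} (r s : Fin J → F[X]) : F[X] :=
  ∑ j : Fin J, (r j + s j * f ^ (𝔮 / 2)) * X ^ (𝔮 * (j : ℕ))

theorem stepanovPoly_eq_zero (hq : Odd 𝔮) {f : F[X]} (hf : Odd f.natDegree) (hf0 : f.coeff 0 ≠ 0)
    {n J : ℕ} (hn : 2 * n + f.natDegree ≤ 𝔮) {r s : Fin J → F[X]} (hr : ∀ j, (r j).natDegree < n)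
    (hs : ∀ j, (s j).natDegree < n) (h : stepanovPoly f r s = 0) (j : Fin J) :
    r j = 0 ∧ s j = 0 := by
  induction J with
  | zero => exact j.elim0
  | succ J ih =>
    have hsplit : stepanovPoly f r s = (r 0 + s 0 * f ^ (𝔮 / 2)) +
        X ^ 𝔮 * stepanovPoly f (fun j ↦ r j.succ) (fun j ↦ s j.succ) := by
      simp only [stepanovPoly, Fin.sum_univ_succ, mul_sum, Fin.val_zero, mul_zero, pow_zero,
        mul_one, Fin.val_succ]
      congr! 2
      ring
    rw [hsplit] at h
    have h0 : r 0 = 0 ∧ s 0 = 0 := by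
      have := hr 0
      have := hs 0
      exact eq_zero_of_X_pow_card_dvd_add_mul_pow hq hf hf0 (by lia) (by lia)
        ⟨_, (eq_neg_of_add_eq_zero_left h).trans (mul_neg _ _).symm⟩
    refine Fin.cases h0 (fun j ↦ ih (fun j ↦ hr j.succ) (fun j ↦ hs j.succ) ?_ j) j
    simpa [h0] using h

theorem natDegree_stepanovPoly_le {f : F[X]} {n J : ℕ} {r s : Fin J → F[X]}
    (hr : ∀ j, (r j).natDegree < n) (hs : ∀ j, (s j).natDegree < n) :
    (stepanovPoly f r s).natDegree ≤ n + 𝔮 / 2 * f.natDegree + 𝔮 * J := by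
  refine natDegree_sum_le_of_forall_le _ _ fun j _ ↦ ?_
  have hsf : (s j * f ^ (𝔮 / 2)).natDegree ≤ n + 𝔮 / 2 * f.natDegree :=
    natDegree_mul_le.trans (add_le_add (hs j).le natDegree_pow_le)
  refine natDegree_mul_le.trans (add_le_add ?_ ?_)
  · exact natDegree_add_le_of_degree_le ((hr j).le.trans (Nat.le_add_right _ _)) hsf
  · rw [natDegree_X_pow]
    gcongr
    exact j.2.le

theorem twistedDerivative_zero_pow_stepanovPoly (f : F[X]) (k : ℕ) {J : ℕ} (r s : Fin J → F[X]) :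
    (twistedDerivative f 0 ^ k) (stepanovPoly f r s) =
      stepanovPoly f (fun j ↦ (twistedDerivative f 0 ^ k) (r j))
        (fun j ↦ (twistedDerivative f (𝔮 / 2) ^ k) (s j)) := by
  simp only [stepanovPoly, map_sum]
  refine sum_congr rfl fun j _ ↦ twistedDerivative_zero_pow_add_mul_pow_mul f _ k _ _ ?_
  simp [derivative_X_pow]

theorem eval_stepanovPoly (f : F[X]) {J : ℕ} (r s : Fin J → F[X]) (x : F) :
    (stepanovPoly f r s).eval x =
      (∑ j : Fin J, (r j + f.eval x ^ (𝔮 / 2) • s j) * X ^ (j : ℕ)).eval x := by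
  simp only [stepanovPoly, eval_finsetSum, eval_mul, eval_add, eval_pow, eval_X, eval_smul,
    smul_eq_mul, pow_mul, FiniteField.pow_card, mul_comm]

/-- There are `2 J n` free coefficients and each of the `l` conditions, on a polynomial of degree
less than `n + l * f.natDegree + J`, is that many linear equations. -/
theorem exists_sum_twistedDerivative_pow_eq_zero {K : Type*} [Field K] (f : K[X]) (m : ℕ) (a : K)
    {n J l : ℕ} (hcount : l * (n + l * f.natDegree + J) < 2 * J * n) :
    ∃ r s : Fin J → K[X], (∀ j, (r j).natDegree < n) ∧ (∀ j, (s j).natDegree < n) ∧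
      (∃ j, ¬(r j = 0 ∧ s j = 0)) ∧
      ∀ k < l, ∑ j : Fin J, ((twistedDerivative f 0 ^ k) (r j) +
        a • (twistedDerivative f m ^ k) (s j)) * X ^ (j : ℕ) = 0 := by
  have hn : 0 < n := by by_contra! h; simp [Nat.le_zero.1 h] at hcount
  have hdeg (g : degreeLT K n) : (g : K[X]).natDegree < n := by
    by_cases hg : (g : K[X]) = 0
    · simpa [hg]
    · exact (natDegree_lt_iff_degree_lt hg).2 (mem_degreeLT.1 g.2)
  have hfinrank (N : ℕ) : Module.finrank K (degreeLT K N) = N := by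
    rw [(degreeLTEquiv K N).finrank_eq, Module.finrank_fin_fun]
  have hfinite (N : ℕ) : FiniteDimensional K (degreeLT K N) :=
    .equiv (degreeLTEquiv K N).symm
  let L (k : Fin l) : (Fin J → degreeLT K n × degreeLT K n) →ₗ[K] K[X] :=
    ∑ j : Fin J, LinearMap.mulRight K (X ^ (j : ℕ)) ∘ₗ
      ((twistedDerivative f 0 ^ (k : ℕ)).coprod (a • twistedDerivative f m ^ (k : ℕ))) ∘ₗ
      ((degreeLT K n).subtype.prodMap (degreeLT K n).subtype) ∘ₗ LinearMap.proj j
  have hL (k : Fin l) (v) : L k v = ∑ j : Fin J, ((twistedDerivative f 0 ^ (k : ℕ)) (v j).1 +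
      a • (twistedDerivative f m ^ (k : ℕ)) (v j).2) * X ^ (j : ℕ) := by
    simp [L]
  have hmem (k : Fin l) (v) : L k v ∈ degreeLT K (n + l * f.natDegree + J) := by
    rw [hL]
    refine Submodule.sum_mem _ fun j _ ↦ mem_degreeLT.2 ?_
    have hk : (k : ℕ) * f.natDegree ≤ l * f.natDegree := by gcongr; exact k.2.le
    have hr := natDegree_twistedDerivative_pow_le f 0 k (v j).1
    have hs := (natDegree_smul_le a _).trans (natDegree_twistedDerivative_pow_le f m k (v j).2)
    have hr' := hdeg (v j).1
    have hs' := hdeg (v j).2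
    refine (degree_le_of_natDegree_le (natDegree_mul_le.trans (add_le_add
      (natDegree_add_le_of_degree_le (n := n + l * f.natDegree) (by lia) (by lia))
      (natDegree_X_pow_le _)))).trans_lt (Nat.cast_lt.2 (by lia))
  obtain ⟨v, hv, hv0⟩ := exists_ne_zero_forall_apply_eq_zero L _ hmem (by
    simpa [Module.finrank_pi_fintype, hfinrank, ← two_mul, mul_left_comm, mul_assoc] using hcount)
  obtain ⟨j, hj⟩ := Function.ne_iff.1 hv
  refine ⟨fun j ↦ (v j).1, fun j ↦ (v j).2, fun j ↦ hdeg _, fun j ↦ hdeg _, ⟨j, ?_⟩, fun k hk ↦ ?_⟩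
  · simpa [Prod.ext_iff] using hj
  · rw [← hL ⟨k, hk⟩, hv0]

theorem mul_card_filter_eval_pow_le (hq : Odd 𝔮) {f : F[X]} (hf : Odd f.natDegree)
    (hf0 : f.coeff 0 ≠ 0) {n J l : ℕ} (hl : l ≤ ringChar F) (hn : 2 * n + f.natDegree ≤ 𝔮)
    (hcount : l * (n + l * f.natDegree + J) < 2 * J * n) [DecidableEq F] {a : F} (ha : a ≠ 0) :
    l * #{x | f.eval x ^ (𝔮 / 2) = a} ≤ n + 𝔮 / 2 * f.natDegree + 𝔮 * J := by
  obtain ⟨r, s, hr, hs, ⟨j, hj⟩, hrs⟩ :=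
    exists_sum_twistedDerivative_pow_eq_zero f (𝔮 / 2) a hcount
  have hne : stepanovPoly f r s ≠ 0 := fun h ↦ hj (stepanovPoly_eq_zero hq hf hf0 hn hr hs h j)
  have hfact : ∀ k < l, (k.factorial : F) ≠ 0 := fun k hk h ↦ by
    have hprime : (ringChar F).Prime := CharP.prime_ringChar F
    rw [ringChar.spec, hprime.dvd_factorial] at h
    lia
  refine (mul_card_le_natDegree_of_X_sub_C_pow_dvd hne fun x hx ↦ ?_).trans
    (natDegree_stepanovPoly_le hr hs)
  have hxa : f.eval x ^ (𝔮 / 2) = a := by simpa using hx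
  have hx0 : f.eval x ≠ 0 := by
    have : 𝔮 / 2 ≠ 0 := by have := Fintype.one_lt_card (α := F); lia
    rintro h
    exact ha (by rw [← hxa, h, zero_pow this])
  refine X_sub_C_pow_dvd_of_eval_twistedDerivative_pow_eq_zero 0 hx0 hfact fun k hk ↦ ?_
  rw [twistedDerivative_zero_pow_stepanovPoly, eval_stepanovPoly, hxa, hrs k hk, eval_zero]

end AuxiliaryPolynomial

section PrimeField

/-- For `d` the degree, `t = ⌊√p⌋` and polynomials of degree less than `n = (p - d) / 2`, one can
impose `l = 2 t` vanishing derivatives with `J = t + 8 d` summands. -/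
theorem stepanov_parameters_admissible {p d n t : ℕ} (hd : 0 < d) (hp : 400 + 8 * d ≤ p)
    (hn : p = 2 * n + d) (ht : t * t ≤ p) (ht20 : 20 ≤ t) :
    2 * t * (n + 2 * t * d + (t + 8 * d)) < 2 * (t + 8 * d) * n := by
  have hdt : d * (t * t) ≤ d * p := Nat.mul_le_mul_left _ ht
  have ht_sq : t * t ≤ d * p := by nlinarith
  have hlower : d * (4 * d + 8 * t) < d * p := Nat.mul_lt_mul_of_pos_left (by nlinarith) hd
  have hdp : d * p = 2 * (d * n) + d * d := by rw [hn]; ring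
  nlinarith

variable {p : ℕ} [Fact p.Prime]

theorem card_filter_eval_pow_le {f : (ZMod p)[X]} (hf : Odd f.natDegree) (hf0 : f.coeff 0 ≠ 0)
    (hp : 400 + 8 * f.natDegree ≤ p) {a : ZMod p} (ha : a ≠ 0) :
    (#{x | f.eval x ^ (p / 2) = a} : ℝ) ≤ p / 2 + 9 * f.natDegree * √p := by
  set d := f.natDegree
  set N := #{x | f.eval x ^ (p / 2) = a}
  set t := Nat.sqrt p
  have hd : 0 < d := hf.pos
  have hodd : Odd p := (Fact.out : p.Prime).odd_of_ne_two (by lia)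
  have ht : t * t ≤ p := Nat.sqrt_le p
  have ht' : p < (t + 1) * (t + 1) := Nat.lt_succ_sqrt p
  have ht20 : 20 ≤ t := Nat.le_sqrt.2 (by lia)
  obtain ⟨n, hn⟩ : ∃ n, p = 2 * n + d := ⟨(p - d) / 2, by grind⟩
  have hcount : 2 * t * N ≤ n + p / 2 * d + p * (t + 8 * d) := by
    have := mul_card_filter_eval_pow_le (by rwa [ZMod.card]) hf hf0 (n := n) (l := 2 * t)
      (by rw [ZMod.ringChar_zmod_n]; nlinarith) (by rw [ZMod.card]; lia)
      (stepanov_parameters_admissible hd hp hn ht ht20) ha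
    rwa [ZMod.card] at this
  have hN : 4 * t * N ≤ 2 * p * t + 18 * d * p := by
    have hhalf : 2 * (p / 2 * d) ≤ p * d := by
      rw [← mul_assoc]; exact Nat.mul_le_mul_right _ (Nat.mul_div_le p 2)
    have hp_le_dp : 1 * p ≤ d * p := Nat.mul_le_mul_right _ hd
    nlinarith
  have hsqrt : √(p : ℝ) ≤ 2 * t := by
    rw [Real.sqrt_le_left (by positivity)]
    exact_mod_cast (by nlinarith : p ≤ (2 * t) ^ 2)
  have hp_le : (p : ℝ) ≤ 2 * t * √p := by
    nlinarith [Real.mul_self_sqrt (Nat.cast_nonneg (α := ℝ) p), Real.sqrt_nonneg (p : ℝ)]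
  have hdp : (18 : ℝ) * d * p ≤ 18 * d * (2 * t * √p) := by gcongr
  have ht0 : (0 : ℝ) < 4 * t := by positivity
  have hN' : (4 : ℝ) * t * N ≤ 2 * p * t + 18 * d * p := mod_cast hN
  exact le_of_mul_le_mul_left (by linarith) ht0

theorem mul_sum_add_card_eq {ι : Type*} [Fintype ι] {φ : ι → ℤ}
    (hφ : ∀ i, φ i = 0 ∨ φ i = 1 ∨ φ i = -1) {σ : ℤ} (hσ : σ = 1 ∨ σ = -1) :
    σ * ∑ i, φ i + Fintype.card ι = 2 * #{i | φ i = σ} + #{i | φ i = 0} := by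
  rw [← card_univ, card_eq_sum_ones, card_filter, card_filter]
  push_cast
  rw [mul_sum, mul_sum, ← sum_add_distrib, ← sum_add_distrib]
  refine sum_congr rfl fun i _ ↦ ?_
  rcases hσ with rfl | rfl <;> rcases hφ i with h | h | h <;> simp [h]

theorem abs_sum_quadraticChar_eval_le_of_large {f : (ZMod p)[X]} (hf : Odd f.natDegree)
    (hf0 : f.coeff 0 ≠ 0) (hp : 400 + 8 * f.natDegree ≤ p) :
    |((∑ x, quadraticChar (ZMod p) (f.eval x) : ℤ) : ℝ)| ≤ 19 * f.natDegree * √p := by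
  set S := ∑ x, quadraticChar (ZMod p) (f.eval x)
  have hp2 : ringChar (ZMod p) ≠ 2 := by rw [ZMod.ringChar_zmod_n]; lia
  have hzeros : (#{x | quadraticChar (ZMod p) (f.eval x) = 0} : ℝ) ≤ f.natDegree * √p := by
    have hle : #{x | quadraticChar (ZMod p) (f.eval x) = 0} ≤ f.natDegree := by
      refine card_le_degree_of_subset_roots fun x hx ↦ ?_
      have hf' : f ≠ 0 := by rintro rfl; simp at hf0
      exact (mem_roots hf').2 (quadraticChar_eq_zero_iff.1 (mem_filter.1 (mem_def.2 hx)).2)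
    have hsqrt : 1 ≤ √(p : ℝ) := Real.one_le_sqrt.2 (mod_cast (Fact.out : p.Prime).one_le)
    calc (#{x | quadraticChar (ZMod p) (f.eval x) = 0} : ℝ) ≤ f.natDegree * 1 := by
          simpa using mod_cast hle
      _ ≤ f.natDegree * √p := by gcongr
  have hbound {σ : ℤ} (hσ : σ = 1 ∨ σ = -1) : σ * (S : ℝ) ≤ 19 * f.natDegree * √p := by
    have hσ0 : (σ : ZMod p) ≠ 0 := by rcases hσ with rfl | rfl <;> simp
    have hcard : (#{x | quadraticChar (ZMod p) (f.eval x) = σ} : ℝ) ≤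
        p / 2 + 9 * f.natDegree * √p := by
      refine le_trans (mod_cast card_le_card fun x hx ↦ ?_)
        (card_filter_eval_pow_le hf hf0 hp hσ0)
      have hx : quadraticChar (ZMod p) (f.eval x) = σ := by simpa using hx
      rw [mem_filter_univ, ← hx, quadraticChar_eq_pow_of_char_ne_two' hp2, ZMod.card]
    have hsum : σ * (S : ℝ) + p = 2 * #{x | quadraticChar (ZMod p) (f.eval x) = σ} +
        #{x | quadraticChar (ZMod p) (f.eval x) = 0} := by
      have := mul_sum_add_card_eq (fun x ↦ quadraticChar_isQuadratic (ZMod p) (f.eval x)) hσ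
      rw [ZMod.card] at this
      exact_mod_cast this
    linarith
  have hupper := hbound (.inl rfl)
  have hlower := hbound (.inr rfl)
  push_cast at hupper hlower
  exact abs_le.2 ⟨by linarith, by linarith⟩

theorem abs_quadraticChar_le_one {F : Type*} [Field F] [Fintype F] [DecidableEq F] (x : F) :
    |quadraticChar F x| ≤ 1 := by
  rcases quadraticChar_isQuadratic F x with h | h | h <;> simp [h]

theorem abs_sum_quadraticChar_le_card {F ι : Type*} [Field F] [Fintype F] [DecidableEq F]
    [Fintype ι] (g : ι → F) : |((∑ i, quadraticChar F (g i) : ℤ) : ℝ)| ≤ Fintype.card ι := by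
  have := (abs_sum_le_sum_abs (fun i ↦ quadraticChar F (g i)) univ).trans
    (sum_le_card_nsmul _ _ 1 fun i _ ↦ abs_quadraticChar_le_one (g i))
  exact_mod_cast this.trans (by simp)

theorem abs_sum_quadraticChar_eval_le {f : (ZMod p)[X]} (hf : Odd f.natDegree) :
    |((∑ x, quadraticChar (ZMod p) (f.eval x) : ℤ) : ℝ)| ≤ 21 * f.natDegree * √p := by
  by_cases hzero : ∃ c, f.eval c ≠ 0
  swap
  · push Not at hzero
    simp only [hzero, MulChar.map_zero, sum_const_zero, Int.cast_zero, abs_zero]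
    positivity
  obtain hp | hp := lt_or_ge p (400 + 8 * f.natDegree)
  · have hsqrt : √(p : ℝ) ≤ 21 * f.natDegree := by
      rw [Real.sqrt_le_left (by positivity)]
      have := hf.pos
      exact_mod_cast (by nlinarith : p ≤ (21 * f.natDegree) ^ 2)
    calc |((∑ x, quadraticChar (ZMod p) (f.eval x) : ℤ) : ℝ)| ≤ p := by
          simpa only [ZMod.card] using abs_sum_quadraticChar_le_card fun x ↦ f.eval x
      _ = √p * √p := (Real.mul_self_sqrt (Nat.cast_nonneg p)).symm
      _ ≤ 21 * f.natDegree * √p := by gcongr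
  · obtain ⟨c, hc⟩ := hzero
    have hdeg : (f.comp (X + C c)).natDegree = f.natDegree := by
      rw [natDegree_comp, natDegree_X_add_C, mul_one]
    have htranslate : ∑ x, quadraticChar (ZMod p) ((f.comp (X + C c)).eval x) =
        ∑ x, quadraticChar (ZMod p) (f.eval x) := by
      simpa using Equiv.sum_comp (Equiv.addRight c) fun x ↦ quadraticChar (ZMod p) (f.eval x)
    have := abs_sum_quadraticChar_eval_le_of_large (f := f.comp (X + C c)) (by rwa [hdeg])
      (by simpa [coeff_zero_eq_eval_zero] using hc) (by rwa [hdeg])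
    rw [htranslate, hdeg] at this
    exact this.trans (by gcongr; norm_num)

end PrimeField

theorem sum_prod_quadraticChar_add {F ι : Type*} [Field F] [Fintype F] [DecidableEq F] [Fintype ι]
    [DecidableEq ι] (hι : Even (Fintype.card ι)) (c : ι → F) (i₀ : ι) :
    ∑ x, ∏ i, quadraticChar F (x + c i) =
      ∑ y, quadraticChar F ((∏ i ∈ univ.erase i₀, (C (c i - c i₀) * X + 1)).eval y) - 1 := by
  have hsubst : ∑ x, ∏ i, quadraticChar F (x + c i) =
      ∑ y : F, ∏ i, quadraticChar F (y⁻¹ + (c i - c i₀)) := by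
    rw [← Equiv.sum_comp ((Equiv.inv F).trans (Equiv.subRight (c i₀)))]
    simp only [Equiv.trans_apply, Equiv.inv_apply, Equiv.subRight_apply, sub_add_eq_add_sub,
      add_sub_assoc]
  have hone : (1 : ℤ) = ∑ y : F, if y = 0 then 1 else 0 := by simp
  rw [hsubst, hone, ← sum_sub_distrib]
  refine sum_congr rfl fun y _ ↦ ?_
  obtain rfl | hy := eq_or_ne y 0
  · rw [prod_eq_zero (mem_univ i₀) (by simp)]
    simp [eval_prod]
  have hfactor (i : ι) : quadraticChar F (y⁻¹ + (c i - c i₀)) =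
      quadraticChar F y⁻¹ * quadraticChar F ((c i - c i₀) * y + 1) := by
    rw [← map_mul]
    congr 1
    field_simp
    ring
  obtain ⟨m, hm⟩ := hι.two_dvd
  have hsq : quadraticChar F y⁻¹ ^ Fintype.card ι = 1 := by
    rw [hm, pow_mul, quadraticChar_sq_one (inv_ne_zero hy), one_pow]
  simp_rw [hfactor]
  rw [prod_mul_distrib, prod_const, card_univ, hsq, one_mul, eval_prod, map_prod,
    ← mul_prod_erase univ _ (mem_univ i₀)]
  simp [hy]

theorem natDegree_prod_C_mul_X_add_one {K ι : Type*} [Field K] {s : Finset ι} {c : ι → K}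
    (hc : ∀ i ∈ s, c i ≠ 0) : (∏ i ∈ s, (C (c i) * X + 1)).natDegree = #s := by
  have hdeg : ∀ i ∈ s, (C (c i) * X + 1).natDegree = 1 := fun i hi ↦ by
    rw [← C_1, natDegree_linear (hc i hi)]
  rw [natDegree_prod _ _ fun i hi ↦ ne_zero_of_natDegree_gt (hdeg i hi).ge, sum_congr rfl hdeg,
    card_eq_sum_ones]

theorem abs_sum_prod_quadraticChar_add_le {p : ℕ} [Fact p.Prime] {ι : Type*} [Fintype ι]
    (hι : Even (Fintype.card ι)) {c : ι → ZMod p} {i₀ : ι}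
    (hc : ∀ i ≠ i₀, c i ≠ c i₀) :
    |((∑ x, ∏ i, quadraticChar (ZMod p) (x + c i) : ℤ) : ℝ)| ≤ 21 * Fintype.card ι * √p := by
  have hcard : #(univ.erase i₀) + 1 = Fintype.card ι := card_erase_add_one (mem_univ i₀)
  have hdeg := natDegree_prod_C_mul_X_add_one (s := univ.erase i₀) (c := fun i ↦ c i - c i₀)
    fun i hi ↦ sub_ne_zero.2 (hc i (ne_of_mem_erase hi))
  have hsum := abs_sum_quadraticChar_eval_le
    (f := ∏ i ∈ univ.erase i₀, (C (c i - c i₀) * X + 1)) (by rw [hdeg]; grind)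
  have hsqrt : 1 ≤ √(p : ℝ) := Real.one_le_sqrt.2 (mod_cast (Fact.out : p.Prime).one_le)
  rw [hdeg] at hsum
  rw [sum_prod_quadraticChar_add hι c i₀, Int.cast_sub, Int.cast_one]
  have := abs_sub (((∑ y, quadraticChar (ZMod p) ((∏ i ∈ univ.erase i₀,
    (C (c i - c i₀) * X + 1)).eval y) : ℤ) : ℝ)) 1
  rw [abs_one] at this
  rw [← hcard]
  push_cast at *
  linarith

end Stepanov

section GowersSum

open Finset

variable {G : Type*} [AddCommGroup G] {k : ℕ}

/-- The linear form `h ↦ ω · h` attached to a vertex `ω` of the discrete cube. -/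
def cubeSum (ω : Fin k → Bool) : (Fin k → G) →+ G :=
  ∑ i, if ω i then Pi.evalAddMonoidHom (fun _ ↦ G) i else 0

theorem cubeSum_apply (ω : Fin k → Bool) (h : Fin k → G) :
    cubeSum ω h = ∑ i, if ω i then h i else 0 := by
  rw [cubeSum, AddMonoidHom.finsetSum_apply]
  exact sum_congr rfl fun i _ ↦ by split_ifs <;> rfl

theorem map_cubeSum {H : Type*} [AddCommGroup H] (φ : G →+ H) (ω : Fin k → Bool)
    (h : Fin k → G) : φ (cubeSum ω h) = cubeSum ω fun i ↦ φ (h i) := by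
  simp only [cubeSum_apply, map_sum, apply_ite φ, map_zero]

theorem cubeSum_false (h : Fin k → G) : cubeSum (fun _ ↦ false) h = 0 := by
  simp [cubeSum_apply]

theorem cubeSum_surjective {ω : Fin k → Bool} (hω : ω ≠ fun _ ↦ false) :
    Function.Surjective (cubeSum (G := G) ω) := by
  obtain ⟨i, hi⟩ := Function.ne_iff.1 hω
  refine fun g ↦ ⟨Pi.single i g, ?_⟩
  rw [cubeSum_apply, sum_eq_single i (fun j _ hj ↦ by simp [hj]) (by simp)]
  simp [Bool.eq_true_of_not_eq_false hi]

theorem card_filter_cubeSum_eq_zero_mul_card [Fintype G] [DecidableEq G] {ω : Fin k → Bool}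
    (hω : ω ≠ fun _ ↦ false) :
    #{h : Fin k → G | cubeSum ω h = 0} * Fintype.card G = Fintype.card G ^ k := by
  have h := (cubeSum (G := G) ω).ker.card_mul_index
  rw [AddSubgroup.index_ker, AddMonoidHom.range_eq_top.2 (cubeSum_surjective hω),
    AddSubgroup.card_top, Nat.card_eq_fintype_card (α := G), Nat.card_eq_fintype_card,
    Nat.card_eq_fintype_card, Fintype.card_fun, Fintype.card_fin] at h
  rw [← h, ← Fintype.card_subtype]
  congr! 1
  exact Fintype.card_congr (.refl _)

theorem sum_sum_ite_cubeSum_eq_zero_le [Fintype G] [DecidableEq G] :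
    ∑ h : Fin k → G, ∑ ω : Fin k → Bool with ω ≠ fun _ ↦ false,
      (if cubeSum ω h = 0 then (Fintype.card G : ℝ) else 0) ≤
        2 ^ k * (Fintype.card G : ℝ) ^ k := by
  rw [sum_comm]
  have hcount : ∀ ω ∈ ({ω | ω ≠ fun _ ↦ false} : Finset (Fin k → Bool)),
      ∑ h : Fin k → G, (if cubeSum ω h = 0 then (Fintype.card G : ℝ) else 0) ≤
        (Fintype.card G : ℝ) ^ k := fun ω hω ↦ by
    rw [← sum_filter, sum_const, nsmul_eq_mul]
    exact_mod_cast (card_filter_cubeSum_eq_zero_mul_card ((mem_filter_univ ω).1 hω)).le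
  refine (sum_le_card_nsmul _ _ _ hcount).trans ?_
  rw [nsmul_eq_mul]
  gcongr
  exact_mod_cast (card_filter_le _ _).trans (by simp)

theorem gowersProd_eq (f : G → ℂ) (n : G) (h : Fin k → G) :
    gowersProd k f n h = ∏ ω : Fin k → Bool,
      (starRingEnd ℂ)^[#{i | ω i = true}] (f (n + cubeSum ω h)) := by
  simp only [gowersProd, cubeSum_apply]

theorem gowersProd_intCast (f : G → ℤ) (n : G) (h : Fin k → G) :
    gowersProd k (fun x ↦ (f x : ℂ)) n h =
      ((∏ ω : Fin k → Bool, f (n + cubeSum ω h) : ℤ) : ℂ) := by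
  rw [gowersProd_eq, Int.cast_prod]
  exact prod_congr rfl fun ω _ ↦ Function.iterate_fixed (map_intCast _ _) _

theorem gowersProd_mul {G₁ G₂ : Type*} [AddCommGroup G₁] [AddCommGroup G₂] (e : G ≃+ G₁ × G₂)
    {f : G → ℂ} {f₁ : G₁ → ℂ} {f₂ : G₂ → ℂ} (hf : ∀ x, f x = f₁ (e x).1 * f₂ (e x).2) (n : G)
    (h : Fin k → G) :
    gowersProd k f n h = gowersProd k f₁ (e n).1 (fun i ↦ (e (h i)).1) *
      gowersProd k f₂ (e n).2 (fun i ↦ (e (h i)).2) := by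
  simp only [gowersProd_eq, ← prod_mul_distrib]
  refine prod_congr rfl fun ω _ ↦ ?_
  have h₁ := map_cubeSum ((AddMonoidHom.fst G₁ G₂).comp e.toAddMonoidHom) ω h
  have h₂ := map_cubeSum ((AddMonoidHom.snd G₁ G₂).comp e.toAddMonoidHom) ω h
  simp only [AddMonoidHom.comp_apply, AddMonoidHom.coe_fst, AddMonoidHom.coe_snd,
    AddEquiv.toAddMonoidHom_eq_coe, AddMonoidHom.coe_coe] at h₁ h₂
  rw [hf, map_add, Prod.fst_add, Prod.snd_add, h₁, h₂, ← RingHom.coe_pow, map_mul]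

theorem norm_gowersProd_le_one {f : G → ℂ} (hf : ∀ x, ‖f x‖ ≤ 1) (n : G) (h : Fin k → G) :
    ‖gowersProd k f n h‖ ≤ 1 := by
  rw [gowersProd, norm_prod]
  refine prod_le_one (fun _ _ ↦ norm_nonneg _) fun ω _ ↦ ?_
  have hconj : Function.Semiconj norm (starRingEnd ℂ) id := RCLike.norm_conj
  rw [(hconj.iterate_right _).eq, Function.iterate_id]
  exact hf _

variable [Fintype G]

/-- The sum over all parallelepipeds underlying the Gowers norm, that is,
`|G| ^ (k + 1) * ‖f‖_{U^k(G)} ^ (2 ^ k)`. -/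
def gowersSum (k : ℕ) (f : G → ℂ) : ℂ :=
  ∑ x : G × (Fin k → G), gowersProd k f x.1 x.2

theorem gowersSum_intCast (f : G → ℤ) :
    gowersSum k (fun x ↦ (f x : ℂ)) =
      ((∑ h : Fin k → G, ∑ n, ∏ ω : Fin k → Bool, f (n + cubeSum ω h) : ℤ) : ℂ) := by
  simp only [gowersSum, gowersProd_intCast, Fintype.sum_prod_type_right, Int.cast_sum]

theorem norm_gowersSum_le {f : G → ℂ} (hf : ∀ x, ‖f x‖ ≤ 1) :
    ‖gowersSum k f‖ ≤ (Fintype.card G : ℝ) ^ (k + 1) := by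
  calc ‖gowersSum k f‖ ≤ ∑ _ : G × (Fin k → G), (1 : ℝ) :=
        norm_sum_le_of_le _ fun x _ ↦ norm_gowersProd_le_one hf x.1 x.2
    _ = (Fintype.card G : ℝ) ^ (k + 1) := by simp [pow_succ']

theorem gowersSum_mul {G₁ G₂ : Type*} [AddCommGroup G₁] [Fintype G₁] [AddCommGroup G₂] [Fintype G₂]
    (e : G ≃+ G₁ × G₂) {f : G → ℂ} {f₁ : G₁ → ℂ} {f₂ : G₂ → ℂ}
    (hf : ∀ x, f x = f₁ (e x).1 * f₂ (e x).2) :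
    gowersSum k f = gowersSum k f₁ * gowersSum k f₂ := by
  let E : G × (Fin k → G) ≃ (G₁ × (Fin k → G₁)) × (G₂ × (Fin k → G₂)) :=
    (e.toEquiv.prodCongr ((Equiv.arrowCongr (.refl _) e.toEquiv).trans
      (Equiv.arrowProdEquivProdArrow _ _ _))).trans (Equiv.prodProdProdComm _ _ _ _)
  rw [gowersSum, gowersSum, gowersSum, sum_mul_sum, ← sum_product', univ_product_univ,
    ← Equiv.sum_comp E]
  exact sum_congr rfl fun x _ ↦ gowersProd_mul e hf x.1 x.2

theorem gowersUAvg_le_of_norm_gowersSum_le {f : G → ℂ} {B : ℝ}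
    (hB : ‖gowersSum k f‖ ≤ B * (Fintype.card G : ℝ) ^ (k + 1)) :
    gowersUAvg k f ≤ B ^ ((1 : ℝ) / 2 ^ k) := by
  have hcard : 0 < (Fintype.card G : ℝ) ^ (k + 1) := by
    have : 0 < Fintype.card G := Fintype.card_pos
    positivity
  rw [gowersUAvg, tsum_fintype, Nat.card_eq_fintype_card]
  refine (le_abs_self _).trans ((Real.abs_rpow_le_abs_rpow _ _).trans ?_)
  refine Real.rpow_le_rpow (abs_nonneg _) ?_ (by positivity)
  rw [abs_div, abs_of_pos hcard, div_le_iff₀ hcard]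
  exact (Complex.abs_re_le_norm _).trans hB

end GowersSum

section PrimeConductor

open Finset

variable {p : ℕ} [Fact p.Prime] {k : ℕ}

/-- The sum on the right is a crude bound for the contribution of a degenerate cube, one with
another vertex at its base point. -/
theorem abs_sum_prod_quadraticChar_cubeSum_le (hk : 1 ≤ k) (h : Fin k → ZMod p) :
    |((∑ n, ∏ ω : Fin k → Bool, quadraticChar (ZMod p) (n + cubeSum ω h) : ℤ) : ℝ)| ≤
      21 * 2 ^ k * √p + ∑ ω : Fin k → Bool with ω ≠ fun _ ↦ false,
        if cubeSum ω h = 0 then (p : ℝ) else 0 := by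
  by_cases hdegenerate : ∃ ω : Fin k → Bool, ω ≠ (fun _ ↦ false) ∧ cubeSum ω h = 0
  · obtain ⟨ω, hω, hzero⟩ := hdegenerate
    have htrivial : |((∑ n, ∏ ω : Fin k → Bool,
        quadraticChar (ZMod p) (n + cubeSum ω h) : ℤ) : ℝ)| ≤ p := by
      simpa only [map_prod, ZMod.card] using
        abs_sum_quadraticChar_le_card fun n : ZMod p ↦ ∏ ω : Fin k → Bool, (n + cubeSum ω h)
    have hsingle := single_le_sum (s := {ω | ω ≠ fun _ ↦ false})
      (f := fun ω ↦ if cubeSum ω h = 0 then (p : ℝ) else 0)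
      (fun _ _ ↦ by positivity) ((mem_filter_univ ω).2 hω)
    simp only [hzero, if_true] at hsingle
    have : 0 ≤ 21 * 2 ^ k * √(p : ℝ) := by positivity
    linarith
  · have hc : ∀ ω ≠ (fun _ ↦ false), cubeSum ω h ≠ cubeSum (fun _ ↦ false) h := fun ω hω hzero ↦
      hdegenerate ⟨ω, hω, hzero.trans (cubeSum_false h)⟩
    have hcard : Fintype.card (Fin k → Bool) = 2 ^ k := by simp
    have hsum := abs_sum_prod_quadraticChar_add_le
      (by rw [hcard]; exact (Nat.even_pow.2 ⟨even_two, by lia⟩)) hc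
    rw [hcard] at hsum
    push_cast at hsum ⊢
    exact hsum.trans (le_add_of_nonneg_right (sum_nonneg fun _ _ ↦ by positivity))

theorem sqrt_mul_norm_gowersSum_quadraticChar_le (hk : 1 ≤ k) :
    √p * ‖gowersSum k fun x : ZMod p ↦ (quadraticChar (ZMod p) x : ℂ)‖ ≤
      22 * 2 ^ k * (p : ℝ) ^ (k + 1) := by
  have hsum : ‖gowersSum k fun x : ZMod p ↦ (quadraticChar (ZMod p) x : ℂ)‖ ≤
      (p : ℝ) ^ k * (21 * 2 ^ k * √p) + 2 ^ k * (p : ℝ) ^ k := by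
    rw [gowersSum_intCast, Complex.norm_intCast, Int.cast_sum]
    refine (abs_sum_le_sum_abs _ _).trans
      ((sum_le_sum fun h _ ↦ abs_sum_prod_quadraticChar_cubeSum_le hk h).trans ?_)
    rw [sum_add_distrib, sum_const, card_univ, Fintype.card_fun, Fintype.card_fin, ZMod.card,
      nsmul_eq_mul, Nat.cast_pow]
    gcongr
    simpa only [ZMod.card] using sum_sum_ite_cubeSum_eq_zero_le (G := ZMod p)
  have hsq : √(p : ℝ) * √p = p := Real.mul_self_sqrt (Nat.cast_nonneg p)
  have hsqrt : √(p : ℝ) ≤ p :=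
    Real.sqrt_le_iff.2 ⟨Nat.cast_nonneg p, mod_cast Nat.le_self_pow two_ne_zero p⟩
  calc √p * ‖gowersSum k fun x : ZMod p ↦ (quadraticChar (ZMod p) x : ℂ)‖
      ≤ √p * ((p : ℝ) ^ k * (21 * 2 ^ k * √p) + 2 ^ k * (p : ℝ) ^ k) := by gcongr
    _ = 2 ^ k * (p : ℝ) ^ k * (21 * (√p * √p) + √p) := by ring
    _ ≤ 2 ^ k * (p : ℝ) ^ k * (21 * p + p) := by rw [hsq]; gcongr
    _ = 22 * 2 ^ k * (p : ℝ) ^ (k + 1) := by ring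

end PrimeConductor

section QuadraticCharacter

theorem isQuadratic_of_forall_conj_eq {R : Type*} [CommRing R] [Finite R] {χ : MulChar R ℂ}
    (hχ : ∀ x, (starRingEnd ℂ) (χ x) = χ x) : χ.IsQuadratic := by
  have hinv : χ⁻¹ = χ := by
    rw [← MulChar.star_eq_inv]
    exact MulChar.ext' hχ
  rw [MulChar.isQuadratic_iff_sq_eq_one, sq]
  nth_rw 1 [← hinv]
  exact inv_mul_cancel χ

theorem isQuadratic_eq_quadraticChar {F R : Type*} [Field F] [Fintype F] [DecidableEq F]
    [CommRing R] [Nontrivial R] {χ : MulChar F R} (hχ : χ.IsQuadratic) (hne : χ ≠ 1) :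
    χ = (quadraticChar F).ringHomComp (Int.castRingHom R) := by
  obtain ⟨g, hg⟩ := IsCyclic.exists_generator (α := Fˣ)
  have hχg : χ g = -1 := by
    rcases hχ g with h | h | h
    · exact absurd h (g.isUnit.map χ).ne_zero
    · exact absurd ((MulChar.eq_iff hg χ 1).2 (by simp [h])) hne
    · exact h
  have hg_not_isSquare : ¬IsSquare (g : F) := by
    rintro ⟨y, hy⟩
    have hy_unit : IsUnit y := isUnit_of_mul_isUnit_left (hy ▸ g.isUnit)
    refine hne ((MulChar.eq_iff hg χ 1).2 ?_)
    rw [hy, map_mul, ← sq, ← MulChar.pow_apply' χ two_ne_zero, hχ.sq_eq_one, ← hy,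
      MulChar.one_apply hy_unit, MulChar.one_apply g.isUnit]
  rw [MulChar.eq_iff hg, hχg, MulChar.ringHomComp_apply,
    quadraticChar_neg_one_iff_not_isSquare.2 hg_not_isSquare]
  simp

end QuadraticCharacter

section Conductor

variable {R : Type*} {n : ℕ}

theorem factorsThrough_of_forall_intCast [CommMonoidWithZero R] [NeZero n]
    {χ : DirichletCharacter R n} {d : ℕ} (hd : d ∣ n)
    (h : ∀ z : ℤ, IsUnit (z : ZMod n) → (d : ℤ) ∣ z - 1 → χ z = 1) : χ.FactorsThrough d := by
  rw [DirichletCharacter.factorsThrough_iff_ker_unitsMap hd]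
  intro u hu
  obtain ⟨z, hz⟩ := ZMod.intCast_surjective (u : ZMod n)
  have hz_mod : (z : ZMod d) = 1 := by
    simpa [ZMod.unitsMap_def, ← hz] using congr_arg Units.val (MonoidHom.mem_ker.1 hu)
  rw [MonoidHom.mem_ker, Units.ext_iff, MulChar.coe_toUnitHom, Units.val_one, ← hz]
  refine h z (hz ▸ u.isUnit) ?_
  rw [← ZMod.intCast_zmod_eq_zero_iff_dvd, Int.cast_sub, hz_mod, Int.cast_one, sub_self]

theorem dvd_of_isPrimitive_of_factorsThrough [CommMonoidWithZero R] [NeZero n]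
    {χ : DirichletCharacter R n} (hχ : χ.IsPrimitive) {d : ℕ} (h : χ.FactorsThrough d) : n ∣ d :=
  hχ.symm.dvd.trans (χ.conductor_dvd_of_mem_conductorSet h)

variable [CommRing R]

theorem factorsThrough_two_mul_of_dvd_sq [NeZero n] {χ : DirichletCharacter R n}
    (hχ : χ.IsQuadratic) {e : ℕ} (hdvd : 2 * e ∣ n) (hsq : n ∣ e ^ 2) :
    χ.FactorsThrough (2 * e) := by
  refine factorsThrough_of_forall_intCast hdvd fun z hz ⟨c, hc⟩ ↦ ?_
  have hz_sq : (z : ZMod n) = (1 + e * c) ^ 2 := by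
    have he : (e : ZMod n) ^ 2 = 0 := mod_cast (ZMod.natCast_eq_zero_iff _ _).2 hsq
    obtain rfl : z = 1 + 2 * e * c := by push_cast at hc; linarith
    push_cast
    linear_combination -(c : ZMod n) ^ 2 * he
  rw [hz_sq, isUnit_pow_iff two_ne_zero] at hz
  rw [hz_sq, map_pow, ← MulChar.pow_apply' χ two_ne_zero, hχ.sq_eq_one, MulChar.one_apply hz]

theorem factorsThrough_prime_of_odd {p b : ℕ} (hp : p.Prime) (hodd : Odd p)
    {χ : DirichletCharacter R (p ^ (b + 1))} (hχ : χ.IsQuadratic) : χ.FactorsThrough p := by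
  have : NeZero p := ⟨hp.ne_zero⟩
  refine factorsThrough_of_forall_intCast (dvd_pow_self p b.succ_ne_zero) fun z _ hz ↦ ?_
  have hz_pow : (z : ZMod (p ^ (b + 1))) ^ p ^ b = 1 := by
    have h := dvd_sub_pow_of_dvd_sub hz b
    rw [one_pow, ← Nat.cast_pow, ← ZMod.intCast_zmod_eq_zero_iff_dvd] at h
    push_cast at h
    exact sub_eq_zero.1 h
  rw [← hχ.pow_odd (hodd.pow (n := b)), MulChar.pow_apply' χ (pow_ne_zero b hp.ne_zero), ← map_pow,
    hz_pow, map_one]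

theorem exponent_eq_one_of_isPrimitive_of_isQuadratic {p m : ℕ} (hp : p.Prime) (hodd : Odd p)
    (hm : m ≠ 0) {χ : DirichletCharacter R (p ^ m)} (hχ : χ.IsPrimitive)
    (hquad : χ.IsQuadratic) : m = 1 := by
  have : NeZero p := ⟨hp.ne_zero⟩
  obtain ⟨b, rfl⟩ := Nat.exists_eq_succ_of_ne_zero hm
  have hdvd := dvd_of_isPrimitive_of_factorsThrough hχ (factorsThrough_prime_of_odd hp hodd hquad)
  have hle := (Nat.pow_dvd_pow_iff_le_right hp.one_lt).1 (hdvd.trans (pow_one p).symm.dvd)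
  lia

theorem exponent_le_three_of_isPrimitive_of_isQuadratic {m : ℕ} {χ : DirichletCharacter R (2 ^ m)}
    (hχ : χ.IsPrimitive) (hquad : χ.IsQuadratic) : m ≤ 3 := by
  by_contra! hm
  obtain ⟨c, rfl⟩ := Nat.exists_eq_add_of_le hm
  have hfactors := factorsThrough_two_mul_of_dvd_sq hquad (e := 2 ^ (c + 2))
    (by rw [← pow_succ']; exact pow_dvd_pow 2 (by lia))
    (by rw [← pow_mul]; exact pow_dvd_pow 2 (by lia))
  rw [← pow_succ'] at hfactors
  have hle := (Nat.pow_dvd_pow_iff_le_right one_lt_two).1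
    (dvd_of_isPrimitive_of_factorsThrough hχ hfactors)
  lia

end Conductor

section ChineseRemainder

/-- The first component of a multiplicative character on a product `B × C`, transported along
`e : A ≃* B × C`; the second component is `mulCharComponent (e.trans MulEquiv.prodComm) χ`. -/
def mulCharComponent {A B C R : Type*} [CommMonoid A] [CommMonoid B] [CommMonoid C]
    [CommMonoidWithZero R] (e : A ≃* B × C) (χ : MulChar A R) : MulChar B R where
  toFun x := χ (e.symm (x, 1))
  map_one' := by rw [← Prod.one_eq_mk, map_one, map_one]
  map_mul' x y := by rw [← map_mul, ← map_mul, Prod.mk_mul_mk, one_mul]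
  map_nonunit' x hx := χ.map_nonunit fun h ↦ hx (Prod.isUnit_iff.1 (by simpa using h.map e)).1

section

variable {A B C R : Type*} [CommMonoid A] [CommMonoid B] [CommMonoid C]

theorem mulCharComponent_apply [CommMonoidWithZero R] (e : A ≃* B × C) (χ : MulChar A R) (x : B) :
    mulCharComponent e χ x = χ (e.symm (x, 1)) :=
  rfl

theorem isQuadratic_mulCharComponent [CommRing R] (e : A ≃* B × C) {χ : MulChar A R}
    (hχ : χ.IsQuadratic) : (mulCharComponent e χ).IsQuadratic := fun x ↦
  hχ (e.symm (x, 1))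

theorem mulCharComponent_mul_mulCharComponent [CommMonoidWithZero R] (e : A ≃* B × C)
    (χ : MulChar A R) (x : A) :
    mulCharComponent e χ (e x).1 * mulCharComponent (e.trans MulEquiv.prodComm) χ (e x).2 =
      χ x := by
  have hswap : (e.trans MulEquiv.prodComm).symm ((e x).2, 1) = e.symm (1, (e x).2) := rfl
  rw [mulCharComponent_apply, mulCharComponent_apply, hswap, ← map_mul, ← map_mul, Prod.mk_mul_mk,
    mul_one, one_mul, Prod.mk.eta, e.symm_apply_apply]

end

variable {a b : ℕ} {R : Type*} [CommMonoidWithZero R]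

theorem changeLevel_mulCharComponent_mul (hab : a.Coprime b) (χ : DirichletCharacter R (a * b)) :
    DirichletCharacter.changeLevel (dvd_mul_right a b)
        (mulCharComponent (ZMod.chineseRemainder hab).toMulEquiv χ) *
      DirichletCharacter.changeLevel (dvd_mul_left b a)
        (mulCharComponent ((ZMod.chineseRemainder hab).toMulEquiv.trans MulEquiv.prodComm) χ) =
      χ := by
  refine MulChar.ext fun u ↦ ?_
  have hfst : (u : ZMod (a * b)).cast = (ZMod.chineseRemainder hab u).1 :=
    (Prod.fst_zmod_cast (R := ZMod a) (S := ZMod b) _).symm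
  have hsnd : (u : ZMod (a * b)).cast = (ZMod.chineseRemainder hab u).2 :=
    (Prod.snd_zmod_cast (R := ZMod a) (S := ZMod b) _).symm
  rw [MulChar.mul_apply, DirichletCharacter.changeLevel_eq_cast_of_dvd,
    DirichletCharacter.changeLevel_eq_cast_of_dvd, hfst, hsnd]
  exact mulCharComponent_mul_mulCharComponent _ χ u

theorem isPrimitive_of_changeLevel_mul_changeLevel [NeZero (a * b)] (hab : a.Coprime b)
    {χ₁ : DirichletCharacter R a} {χ₂ : DirichletCharacter R b}
    (h : (DirichletCharacter.changeLevel (dvd_mul_right a b) χ₁ *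
      DirichletCharacter.changeLevel (dvd_mul_left b a) χ₂).IsPrimitive) :
    χ₁.IsPrimitive ∧ χ₂.IsPrimitive := by
  have hdvd : a * b ∣ χ₁.conductor * χ₂.conductor := by
    have hlcm := h.symm.dvd.trans (DirichletCharacter.conductor_mul_dvd_lcm_conductor _ _)
    rw [DirichletCharacter.conductor_changeLevel, DirichletCharacter.conductor_changeLevel] at hlcm
    exact hlcm.trans (Nat.lcm_dvd_mul _ _)
  have h₁ := χ₁.conductor_dvd_level
  have h₂ := χ₂.conductor_dvd_level
  exact ⟨h₁.antisymm ((hab.coprime_dvd_right h₂).dvd_of_dvd_mul_right (dvd_of_mul_right_dvd hdvd)),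
    h₂.antisymm ((hab.symm.coprime_dvd_right h₁).dvd_of_dvd_mul_left (dvd_of_mul_left_dvd hdvd))⟩

end ChineseRemainder

section DirichletCharacter

variable {k : ℕ}

theorem sqrt_mul_norm_gowersSum_prime_pow_le (hk : 1 ≤ k) {p m : ℕ} (hp : p.Prime) (hm : m ≠ 0)
    [NeZero (p ^ m)] {χ : DirichletCharacter ℂ (p ^ m)} (hχ : χ.IsPrimitive)
    (hquad : χ.IsQuadratic) :
    √(p ^ m : ℕ) * ‖gowersSum k fun x : ZMod (p ^ m) ↦ χ x‖ ≤
      22 * 2 ^ k * ((p ^ m : ℕ) : ℝ) ^ (k + 1) := by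
  rcases hp.eq_two_or_odd' with rfl | hodd
  · have hm_le := exponent_le_three_of_isPrimitive_of_isQuadratic hχ hquad
    have hsqrt : √(2 ^ m : ℕ) ≤ 22 * 2 ^ k := by
      have hle : ((2 ^ m : ℕ) : ℝ) ≤ 2 ^ 3 := mod_cast pow_le_pow_right₀ one_le_two hm_le
      have hpow : (1 : ℝ) ≤ 2 ^ k := one_le_pow₀ one_le_two
      exact Real.sqrt_le_iff.2 ⟨by positivity, by nlinarith⟩
    have htrivial := norm_gowersSum_le (k := k) fun x : ZMod (2 ^ m) ↦ χ.norm_le_one x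
    rw [ZMod.card] at htrivial
    gcongr
  · obtain rfl := exponent_eq_one_of_isPrimitive_of_isQuadratic hp hodd hm hχ hquad
    have : Fact (p ^ 1).Prime := ⟨(pow_one p).symm ▸ hp⟩
    have hne : χ ≠ 1 := fun h ↦ by
      rw [DirichletCharacter.eq_one_iff_conductor_eq_one, hχ] at h
      exact (Fact.out : (p ^ 1).Prime).ne_one h
    simpa only [isQuadratic_eq_quadraticChar hquad hne, MulChar.ringHomComp_apply,
      eq_intCast] using sqrt_mul_norm_gowersSum_quadraticChar_le (p := p ^ 1) hk

theorem gowersSum_mulCharComponent_mul {a b : ℕ} [NeZero a] [NeZero b] [NeZero (a * b)]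
    (hab : a.Coprime b) (χ : DirichletCharacter ℂ (a * b)) :
    (gowersSum k fun x : ZMod (a * b) ↦ χ x) =
      (gowersSum k fun x : ZMod a ↦
        mulCharComponent (ZMod.chineseRemainder hab).toMulEquiv χ x) *
      gowersSum k fun x : ZMod b ↦
        mulCharComponent ((ZMod.chineseRemainder hab).toMulEquiv.trans MulEquiv.prodComm) χ x :=
  gowersSum_mul (ZMod.chineseRemainder hab).toAddEquiv fun x ↦
    (mulCharComponent_mul_mulCharComponent _ χ x).symm

theorem sqrt_mul_norm_gowersSum_le (hk : 1 ≤ k) {q : ℕ} [hq : NeZero q] {χ : DirichletCharacter ℂ q}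
    (hχ : χ.IsPrimitive) (hquad : χ.IsQuadratic) :
    √q * ‖gowersSum k fun x : ZMod q ↦ χ x‖ ≤
      (22 * 2 ^ k) ^ q.primeFactors.card * (q : ℝ) ^ (k + 1) := by
  induction q using Nat.recOnPosPrimePosCoprime generalizing hq with
  | zero => exact absurd rfl (NeZero.ne 0)
  | one => simpa using norm_gowersSum_le (k := k) fun x : ZMod 1 ↦ χ.norm_le_one x
  | prime_pow p m hp hm =>
    rw [Nat.primeFactors_prime_pow hm.ne' hp, Finset.card_singleton, pow_one]
    exact sqrt_mul_norm_gowersSum_prime_pow_le hk hp hm.ne' hχ hquad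
  | coprime a b ha hb hab iha ihb =>
    have : NeZero a := ⟨by lia⟩
    have : NeZero b := ⟨by lia⟩
    rw [← changeLevel_mulCharComponent_mul hab χ] at hχ
    obtain ⟨hχ₁, hχ₂⟩ := isPrimitive_of_changeLevel_mul_changeLevel hab hχ
    have h₁ := iha hχ₁ (isQuadratic_mulCharComponent _ hquad)
    have h₂ := ihb hχ₂ (isQuadratic_mulCharComponent _ hquad)
    rw [gowersSum_mulCharComponent_mul hab, norm_mul, hab.primeFactors_mul,
      Finset.card_union_of_disjoint hab.disjoint_primeFactors, Nat.cast_mul,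
      Real.sqrt_mul (Nat.cast_nonneg a), pow_add, mul_pow (a : ℝ), mul_mul_mul_comm,
      mul_mul_mul_comm (_ ^ _)]
    exact mul_le_mul h₁ h₂ (by positivity) (by positivity)

theorem le_ite_mul_rpow {K η : ℝ} (hK : 1 ≤ K) (hη : 0 < η) {N : ℕ} (hN : K ^ η⁻¹ ≤ N) {p : ℕ}
    (hp : 1 ≤ p) : K ≤ (if p < N then K else 1) * (p : ℝ) ^ η := by
  split_ifs with h
  · exact le_mul_of_one_le_right (by positivity) (Real.one_le_rpow (mod_cast hp) hη.le)
  · rw [one_mul, ← Real.rpow_inv_le_iff_of_pos (by positivity) (by positivity) hη]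
    exact hN.trans (mod_cast not_lt.1 h)

/-- Only the boundedly many primes below `K ^ η⁻¹` lose a constant factor: every larger prime
satisfies `K ≤ p ^ η`. -/
theorem exists_pow_card_primeFactors_le {K η : ℝ} (hK : 1 ≤ K) (hη : 0 < η) :
    ∃ C : ℝ, 0 < C ∧ ∀ q : ℕ, q ≠ 0 → K ^ q.primeFactors.card ≤ C * (q : ℝ) ^ η := by
  obtain ⟨N, hN⟩ := exists_nat_ge (K ^ η⁻¹)
  refine ⟨K ^ N, by positivity, fun q hq ↦ ?_⟩
  have hsmall : ∏ p ∈ q.primeFactors, (if p < N then K else 1) ≤ K ^ N := by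
    rw [Finset.prod_ite, Finset.prod_const, Finset.prod_const_one, mul_one]
    refine pow_le_pow_right₀ hK ?_
    simpa using Finset.card_le_card (t := Finset.range N) fun p hp ↦
      Finset.mem_range.2 (Finset.mem_filter.1 hp).2
  have hrad : ∏ p ∈ q.primeFactors, (p : ℝ) ^ η ≤ (q : ℝ) ^ η := by
    rw [Real.finsetProd_rpow _ _ (fun _ _ ↦ by positivity), ← Nat.cast_prod]
    gcongr
    exact Nat.le_of_dvd (Nat.pos_of_ne_zero hq) (Nat.prod_primeFactors_dvd q)
  calc K ^ q.primeFactors.card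
      = ∏ _p ∈ q.primeFactors, K := (Finset.prod_const K).symm
    _ ≤ ∏ p ∈ q.primeFactors, ((if p < N then K else 1) * (p : ℝ) ^ η) :=
        Finset.prod_le_prod (fun _ _ ↦ by positivity) fun _ hp ↦
          le_ite_mul_rpow hK hη hN (Nat.prime_of_mem_primeFactors hp).one_le
    _ ≤ K ^ N * (q : ℝ) ^ η := by rw [Finset.prod_mul_distrib]; gcongr

end DirichletCharacter

theorem quadratic_character_gowers_cancellation (k : ℕ) (hk : 1 ≤ k) (ε : ℝ) (hε : 0 < ε) :
    ∃ C : ℝ, 0 < C ∧ ∀ q : ℕ, 1 ≤ q → ∀ χ : DirichletCharacter ℂ q,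
      χ.IsPrimitive → (∀ n : ZMod q, (starRingEnd ℂ) (χ n) = χ n) →
      gowersUAvg k (fun x : ZMod q => χ x) ≤ C * (q : ℝ) ^ (-(1 : ℝ) / 2 ^ (k + 1) + ε) := by
  have hK : (1 : ℝ) ≤ 22 * 2 ^ k := by linarith [one_le_pow₀ (n := k) (one_le_two (α := ℝ))]
  obtain ⟨C, hC, hCq⟩ := exists_pow_card_primeFactors_le hK (η := ε * 2 ^ k) (by positivity)
  refine ⟨C ^ ((1 : ℝ) / 2 ^ k), by positivity, fun q hq χ hχ hreal ↦ ?_⟩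
  have : NeZero q := ⟨by lia⟩
  have hq_pos : (0 : ℝ) < q := mod_cast hq
  have hsum : ‖gowersSum k fun x : ZMod q ↦ χ x‖ ≤
      C * (q : ℝ) ^ (ε * 2 ^ k - 1 / 2) * (Fintype.card (ZMod q) : ℝ) ^ (k + 1) := by
    rw [ZMod.card, Real.rpow_sub hq_pos, ← Real.sqrt_eq_rpow, mul_div_assoc', div_mul_eq_mul_div,
      le_div_iff₀' (Real.sqrt_pos.2 hq_pos)]
    refine (sqrt_mul_norm_gowersSum_le hk hχ (isQuadratic_of_forall_conj_eq hreal)).trans ?_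
    gcongr
    exact hCq q (NeZero.ne q)
  calc gowersUAvg k (fun x : ZMod q ↦ χ x)
      ≤ (C * (q : ℝ) ^ (ε * 2 ^ k - 1 / 2)) ^ ((1 : ℝ) / 2 ^ k) :=
        gowersUAvg_le_of_norm_gowersSum_le hsum
    _ = C ^ ((1 : ℝ) / 2 ^ k) * (q : ℝ) ^ (-(1 : ℝ) / 2 ^ (k + 1) + ε) := by
        rw [Real.mul_rpow hC.le (by positivity), ← Real.rpow_mul hq_pos.le, pow_succ]
        congr 2
        field_simp
        ring
end
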